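/- Second new modulus-8 A_2 Rogers–Ramanujan identity: the quadruple sum over n_1,n_2,n_3,n_4 ≥ 0 of q^(n_1^2+n_2^2+n_3^2+n_4^2+n_2+n_3+n_4-n_1n_2+n_2n_4)/(q;q)_{n_1} · [n_1 choose n_2]_q [n_1 choose n_4]_q [n_2 choose n_3]_q equals 1/((q,q^2,q^3,q^4,q^4,q^5,q^6,q^7; q^8)_∞). -/

import Mathlib

/-!
The quadruple sum is refined by a variable `z` marking `n₁`. Contiguous relations for the resulting
series `gen t a b c d`, one for each summation variable, show that seven of their combinations,
indexed by the rank 3, level 5 profiles and multiplied by Euler's series `1/(z;q)_∞`, satisfy the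
Corteel-Welsh functional equations for cylindric partitions (`cylindric_sol`). The profile `(4,1,0)`
carries the sum of the theorem.

A second solution consists of the series in `z` whose coefficient of `z^n` is a finite theta sum over
the `A₂` lattice, an alternating sum of terms `q^Q(v) / ((q;q)_{n+v₁} (q;q)_{n+v₂} (q;q)_{n+v₃})`
twisted by the quadratic character modulo 3 (`cylindric_thSol`). The equations hold since applying
the three operators `1 - q^n Tᵢ`, with `Tᵢ` raising the `i`-th parameter, lowers `n`, and since the
sums satisfy a linear relation on each wall.

The system has only one solution over `ℚ((q))` (`Cylindric.unique`), so comparing coefficients of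
`z^n` gives an identity between a partial quadruple sum and a finite theta sum for
each `n` (`finite_identity`). Letting `n → ∞`, that is, reducing modulo `q^N` for large `n`, the
sum side times `1/(q;q)_∞` equals `1/(q;q)_∞³` times a double theta series. In suitable coordinates
on the lattice (`param`) this double series is the product of Euler's pentagonal series, which is
`(q;q)_∞`, and Gauss's triangular series in `q^4`, which is `(q^8;q^8)_∞ / (q^4;q^8)_∞` and is
obtained from Shanks' finite identity (`shanks`). Hence the sum is
`(q^8;q^8)_∞ / ((q^4;q^8)_∞ (q;q)_∞)`, which is the product of the theorem.

The topology on `ℚ⟦X⟧` is that of coefficientwise convergence, so that congruences modulo all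
`q^N` suffice to evaluate the infinite sum and product.
-/

open scoped Finset

noncomputable instance : TopologicalSpace (PowerSeries ℚ) :=
  Pi.topologicalSpace (ι := Unit →₀ ℕ) (Y := fun _ => ℚ)

/-- The formal variable `q`. -/
noncomputable def q : PowerSeries ℚ := PowerSeries.X

/-- The q-Pochhammer symbol `(q;q)_n = ∏_{k=0}^{n-1} (1 - q·q^k)`. -/
noncomputable def qPoch (n : ℕ) : PowerSeries ℚ :=
  ∏ k ∈ Finset.range n, (1 - q ^ (k + 1))

/-- The Gaussian binomial coefficient `[m choose k]_q`, zero unless `k ≤ m`. -/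
noncomputable def qBinom (m k : ℕ) : PowerSeries ℚ :=
  if k ≤ m then qPoch m * (qPoch k * qPoch (m - k))⁻¹ else 0

namespace A2Mod8

open PowerSeries

/-! ### Quadruple sums and their contiguous relations -/

section Field

variable {K : Type*} [Field K]

/-- The finite product `(t;t)_n` in a field. -/
def poc (t : K) (n : ℕ) : K := ∏ k ∈ Finset.range n, (1 - t ^ (k + 1))

/-- The reciprocal `1/(t;t)_n` for an integer index `n`, with the usual convention that it vanishes
for `n < 0`. -/
def rp (t : K) (n : ℤ) : K := if n < 0 then 0 else (poc t n.toNat)⁻¹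

/-- `t` is neither zero nor a root of unity. -/
structure Generic (t : K) : Prop where
  ne : t ≠ 0
  pow : ∀ n : ℕ, 1 - t ^ (n + 1) ≠ 0

lemma poc_ne {t : K} (ht : Generic t) (n : ℕ) : poc t n ≠ 0 :=
  Finset.prod_ne_zero_iff.2 fun k _ => ht.pow k

lemma rp_neg (t : K) {n : ℤ} (h : n < 0) : rp t n = 0 := if_pos h

lemma rp_nat (t : K) (n : ℕ) : rp t n = (poc t n)⁻¹ := by
  simp [rp]

/-- The recurrence `1/(t;t)_{n-1} = (1 - t^n)/(t;t)_n` holds for all integers `n`. -/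
lemma rp_pred {t : K} (ht : Generic t) (n : ℤ) : rp t (n - 1) = (1 - t ^ n) * rp t n := by
  rcases lt_trichotomy n 0 with h | h | h
  · rw [rp_neg t h, rp_neg t (by omega), mul_zero]
  · subst h; simp [rp]
  · obtain ⟨k, rfl⟩ : ∃ k : ℕ, n = (k : ℤ) + 1 := ⟨(n - 1).toNat, by omega⟩
    have h1 : ((k : ℤ) + 1) = ((k + 1 : ℕ) : ℤ) := by push_cast; ring
    rw [add_sub_cancel_right, h1, rp_nat, rp_nat, zpow_natCast, poc, poc,
      Finset.prod_range_succ, mul_inv, mul_comm _⁻¹, ← mul_assoc, mul_inv_cancel₀ (ht.pow k),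
      one_mul]

/-- The reciprocal `(t;t)` factors of the quadruple sum at level `m`, without `(t;t)_m`. -/
def core (t : K) (m : ℤ) (n : ℤ × ℤ × ℤ) : K :=
  rp t (m - n.1) * rp t (n.1 - n.2.1) * rp t n.2.1 * rp t (m - n.2.2) * rp t n.2.2

/-- The quadratic form plus linear form in the exponent. -/
def expo (a b c d m : ℤ) (n : ℤ × ℤ × ℤ) : ℤ :=
  m ^ 2 + n.1 ^ 2 + n.2.1 ^ 2 + n.2.2 ^ 2 - m * n.1 + n.1 * n.2.2
    + a * m + b * n.1 + c * n.2.1 + d * n.2.2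

/-- Summand of the quadruple sum at level `m`, without `(t;t)_m`. -/
def term (t : K) (a b c d m : ℤ) (n : ℤ × ℤ × ℤ) : K := t ^ expo a b c d m n * core t m n

lemma core_support (t : K) (m : ℤ) :
    Function.support (core t m) ⊆
      (Finset.Icc 0 m ×ˢ Finset.Icc 0 m ×ˢ Finset.Icc 0 m : Finset (ℤ × ℤ × ℤ)) := by
  rintro ⟨x, y, z⟩ h
  by_contra hn
  apply h
  by_cases h1 : m - x < 0
  · simp [core, rp_neg t h1]
  by_cases h2 : x - y < 0
  · simp [core, rp_neg t h2]
  by_cases h3 : y < 0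
  · simp [core, rp_neg t h3]
  by_cases h4 : m - z < 0
  · simp [core, rp_neg t h4]
  by_cases h5 : z < 0
  · simp [core, rp_neg t h5]
  simp only [Finset.coe_product, Finset.coe_Icc, Set.mem_prod, Set.mem_Icc] at hn
  omega

lemma term_finite (t : K) (a b c d m : ℤ) : (Function.support (term t a b c d m)).Finite := by
  refine (Finset.finite_toSet _).subset ((Function.support_mul_subset_right _ _).trans
    (core_support t m))

/-- The inner triple sum at level `m`, without the factor `(t;t)_m`. -/
noncomputable def tri (t : K) (a b c d m : ℤ) : K := ∑ᶠ n, term t a b c d m n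

/-- The coefficient of `z^m`, `m = n₁`, in the quadruple sum with linear exponent
`a n₁ + b n₂ + c n₃ + d n₄`. -/
noncomputable def lev (t : K) (a b c d : ℤ) (m : ℕ) : K := poc t m * tri t a b c d m

/-- The generating function in `z` of the quadruple sum. -/
noncomputable def gen (t : K) (a b c d : ℤ) : K⟦X⟧ := PowerSeries.mk (lev t a b c d)

/-- Shifting the parameters `(a,b,c,d)` multiplies the summand by the corresponding power. -/
lemma term_shift {t : K} (ht : Generic t) (a b c d m : ℤ) (n : ℤ × ℤ × ℤ) (a' b' c' d' : ℤ) :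
    term t (a + a') (b + b') (c + c') (d + d') m n =
      t ^ (a' * m + b' * n.1 + c' * n.2.1 + d' * n.2.2) * term t a b c d m n := by
  rw [term, term, ← mul_assoc, ← zpow_add₀ ht.ne]
  congr 2
  unfold expo
  ring

lemma finsum_shift {f : ℤ × ℤ × ℤ → K} (v : ℤ × ℤ × ℤ) : ∑ᶠ n, f n = ∑ᶠ n, f (n + v) :=
  (finsum_comp_equiv (Equiv.addRight v)).symm

lemma tri_sub (t : K) (a b c d a' b' c' d' m : ℤ) :
    tri t a b c d m - tri t a' b' c' d' m =
      ∑ᶠ n, (term t a b c d m n - term t a' b' c' d' m n) :=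
  (finsum_sub_distrib (term_finite t a b c d m) (term_finite t a' b' c' d' m)).symm

lemma mul_tri (t x : K) (a b c d m : ℤ) :
    x * tri t a b c d m = ∑ᶠ n, x * term t a b c d m n :=
  mul_finsum _ _

/-- The contiguous relation in `n₄`: the factor `1 - t^(n₄)` cancels against `1/(t;t)_{n₄}`, and
`n₄` is then shifted by one. The relations `tri3`, `tri2`, `tri1` arise in the same way from `n₃`,
from `n₂`, and from the outer index `m`. -/
lemma tri4 {t : K} (ht : Generic t) (a b c d m : ℤ) :
    tri t a b c d m - tri t a b c (d + 1) m =
      t ^ (1 + d) * (tri t a (b + 1) c (d + 2) m - tri t (a + 1) (b + 1) c (d + 1) m) := by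
  rw [tri_sub, tri_sub, mul_finsum, finsum_shift (0, 0, 1)]
  · refine finsum_congr fun n => ?_
    obtain ⟨x, y, z⟩ := n
    have h := rp_pred ht (z + 1)
    have h' := rp_pred ht (m - z)
    rw [add_sub_cancel_right] at h
    rw [show m - z - 1 = m - (z + 1) by ring] at h'
    simp only [term, core, Prod.mk_add_mk, add_zero]
    rw [h', h]
    have e0 : expo a b c d m (x, y, z + 1) = (1 + d) + expo a (b + 1) c (d + 2) m (x, y, z) := by
      simp only [expo]; ring
    have e1 : expo a b c (d + 1) m (x, y, z + 1)
        = (1 + d) + expo a (b + 1) c (d + 2) m (x, y, z) + (z + 1) := by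
      simp only [expo]; ring
    have e2 : expo (a + 1) (b + 1) c (d + 1) m (x, y, z)
        = expo a (b + 1) c (d + 2) m (x, y, z) + (m - z) := by
      simp only [expo]; ring
    rw [e0, e1, e2, zpow_add₀ ht.ne _ (z + 1), zpow_add₀ ht.ne (1 + d), zpow_add₀ ht.ne _ (m - z)]
    ring

lemma tri3 {t : K} (ht : Generic t) (a b c d m : ℤ) :
    tri t a b c d m - tri t a b (c + 1) d m =
      t ^ (1 + c) * (tri t a b (c + 2) d m - tri t a (b + 1) (c + 1) d m) := by
  rw [tri_sub, tri_sub, mul_finsum, finsum_shift (0, 1, 0)]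
  · refine finsum_congr fun n => ?_
    obtain ⟨x, y, z⟩ := n
    have h := rp_pred ht (y + 1)
    have h' := rp_pred ht (x - y)
    rw [add_sub_cancel_right] at h
    rw [show x - y - 1 = x - (y + 1) by ring] at h'
    simp only [term, core, Prod.mk_add_mk, add_zero]
    rw [h', h]
    have e0 : expo a b c d m (x, y + 1, z) = (1 + c) + expo a b (c + 2) d m (x, y, z) := by
      simp only [expo]; ring
    have e1 : expo a b (c + 1) d m (x, y + 1, z)
        = (1 + c) + expo a b (c + 2) d m (x, y, z) + (y + 1) := by
      simp only [expo]; ring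
    have e2 : expo a (b + 1) (c + 1) d m (x, y, z)
        = expo a b (c + 2) d m (x, y, z) + (x - y) := by
      simp only [expo]; ring
    rw [e0, e1, e2, zpow_add₀ ht.ne _ (y + 1), zpow_add₀ ht.ne (1 + c), zpow_add₀ ht.ne _ (x - y)]
    ring

lemma tri2 {t : K} (ht : Generic t) (a b c d m : ℤ) :
    tri t a b c d m - tri t a (b + 1) (c - 1) d m =
      t ^ (1 + b) * (tri t (a - 1) (b + 2) c (d + 1) m - tri t a (b + 1) c (d + 1) m) := by
  rw [tri_sub, tri_sub, mul_finsum, finsum_shift (1, 0, 0)]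
  · refine finsum_congr fun n => ?_
    obtain ⟨x, y, z⟩ := n
    have h := rp_pred ht (x + 1 - y)
    have h' := rp_pred ht (m - x)
    rw [show x + 1 - y - 1 = x - y by ring] at h
    rw [show m - x - 1 = m - (x + 1) by ring] at h'
    simp only [term, core, Prod.mk_add_mk, add_zero]
    rw [h', h]
    have e0 : expo a b c d m (x + 1, y, z) = (1 + b) + expo (a - 1) (b + 2) c (d + 1) m (x, y, z) := by
      simp only [expo]; ring
    have e1 : expo a (b + 1) (c - 1) d m (x + 1, y, z)
        = (1 + b) + expo (a - 1) (b + 2) c (d + 1) m (x, y, z) + (x + 1 - y) := by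
      simp only [expo]; ring
    have e2 : expo a (b + 1) c (d + 1) m (x, y, z)
        = expo (a - 1) (b + 2) c (d + 1) m (x, y, z) + (m - x) := by
      simp only [expo]; ring
    rw [e0, e1, e2, zpow_add₀ ht.ne _ (x + 1 - y), zpow_add₀ ht.ne (1 + b), zpow_add₀ ht.ne _ (m - x)]
    ring

lemma tri1 {t : K} (ht : Generic t) (a b c d m : ℤ) :
    (tri t a b c d (m + 1) - tri t (a + 1) (b - 1) c d (m + 1))
      - (tri t (a + 1) b c (d - 1) (m + 1) - tri t (a + 2) (b - 1) c (d - 1) (m + 1)) =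
      t ^ (1 + a) * tri t (a + 2) (b - 1) c d m := by
  have fin := fun a b c d a' b' c' d' m => ((term_finite t a b c d m).union
    (term_finite t a' b' c' d' m)).subset (Function.support_sub _ _)
  rw [tri_sub, tri_sub, mul_tri, ← finsum_sub_distrib (fin ..) (fin ..)]
  refine finsum_congr fun n => ?_
  obtain ⟨x, y, z⟩ := n
  have h := rp_pred ht (m + 1 - x)
  have h' := rp_pred ht (m + 1 - z)
  rw [show m + 1 - x - 1 = m - x by ring] at h
  rw [show m + 1 - z - 1 = m - z by ring] at h'
  simp only [term, core]
  rw [h', h]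
  have e0 : expo a b c d (m + 1) (x, y, z)
      = (1 + a) + expo (a + 2) (b - 1) c d m (x, y, z) := by
    simp only [expo]; ring
  have e1 : expo (a + 1) (b - 1) c d (m + 1) (x, y, z)
      = (1 + a) + expo (a + 2) (b - 1) c d m (x, y, z) + (m + 1 - x) := by
    simp only [expo]; ring
  have e2 : expo (a + 1) b c (d - 1) (m + 1) (x, y, z)
      = (1 + a) + expo (a + 2) (b - 1) c d m (x, y, z) + (m + 1 - z) := by
    simp only [expo]; ring
  have e3 : expo (a + 2) (b - 1) c (d - 1) (m + 1) (x, y, z)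
      = (1 + a) + expo (a + 2) (b - 1) c d m (x, y, z) + (m + 1 - x) + (m + 1 - z) := by
    simp only [expo]; ring
  rw [e3, e0, e1, e2]
  simp only [zpow_add₀ ht.ne _ (m + 1 - z), zpow_add₀ ht.ne _ (m + 1 - x),
    zpow_add₀ ht.ne (1 + a)]
  ring

lemma tri_raise {t : K} (ht : Generic t) (a b c d m : ℤ) :
    tri t (a + 1) b c d m = t ^ m * tri t a b c d m := by
  rw [mul_tri]
  refine finsum_congr fun n => ?_
  have := term_shift ht a b c d m n 1 0 0 0
  simpa using this

/-- The substitution `z ↦ t z` raises the parameter `a`. -/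
lemma rescale_gen {t : K} (ht : Generic t) (a b c d : ℤ) :
    rescale t (gen t a b c d) = gen t (a + 1) b c d := by
  ext m
  rw [coeff_rescale, gen, gen, coeff_mk, coeff_mk, lev, lev, tri_raise ht, zpow_natCast]
  ring

lemma gen4 {t : K} (ht : Generic t) (a b c d : ℤ) :
    gen t a b c d - gen t a b c (d + 1) =
      C (t ^ (1 + d)) * (gen t a (b + 1) c (d + 2) - gen t (a + 1) (b + 1) c (d + 1)) := by
  ext m
  simp only [map_sub, coeff_C_mul, gen, coeff_mk, lev]
  linear_combination poc t m * tri4 ht a b c d m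

lemma gen3 {t : K} (ht : Generic t) (a b c d : ℤ) :
    gen t a b c d - gen t a b (c + 1) d =
      C (t ^ (1 + c)) * (gen t a b (c + 2) d - gen t a (b + 1) (c + 1) d) := by
  ext m
  simp only [map_sub, coeff_C_mul, gen, coeff_mk, lev]
  linear_combination poc t m * tri3 ht a b c d m

lemma gen2 {t : K} (ht : Generic t) (a b c d : ℤ) :
    gen t a b c d - gen t a (b + 1) (c - 1) d =
      C (t ^ (1 + b)) * (gen t (a - 1) (b + 2) c (d + 1) - gen t a (b + 1) c (d + 1)) := by
  ext m
  simp only [map_sub, coeff_C_mul, gen, coeff_mk, lev]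
  linear_combination poc t m * tri2 ht a b c d m

lemma tri_zero (t : K) (a b c d : ℤ) : tri t a b c d 0 = 1 := by
  rw [tri, finsum_eq_single _ (0, 0, 0)]
  · simp [term, core, expo, rp, poc]
  · intro n hn
    by_contra h
    have := core_support t 0 (right_ne_zero_of_mul h)
    simp at this
    exact hn (by ext <;> simp [this])

/-- The coefficient of `z^m` is `tri1`; the factor `1 - t^(m+1)` relating `(t;t)_{m+1}` to
`(t;t)_m` produces the last term. -/
lemma gen1 {t : K} (ht : Generic t) (a b c d : ℤ) :
    gen t a b c d - gen t (a + 1) (b - 1) c d - gen t (a + 1) b c (d - 1)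
      + gen t (a + 2) (b - 1) c (d - 1) =
      C (t ^ (1 + a)) * X * (gen t (a + 2) (b - 1) c d - C t * gen t (a + 3) (b - 1) c d) := by
  ext m
  cases m with
  | zero =>
    simp only [map_sub, map_add, coeff_C_mul, mul_assoc, coeff_zero_X_mul]
    simp [gen, lev, tri_zero]
  | succ m =>
    simp only [map_sub, map_add, coeff_C_mul, mul_assoc, coeff_succ_X_mul, gen, coeff_mk, lev]
    have h := tri_raise ht (a + 2) (b - 1) c d m
    rw [show a + 2 + 1 = a + 3 by ring] at h
    have hp : poc t (m + 1) = poc t m * (1 - t ^ (m + 1)) := Finset.prod_range_succ _ _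
    rw [hp, h, zpow_natCast]
    push_cast
    linear_combination poc t m * (1 - t ^ (m + 1)) * tri1 ht a b c d m

end Field

/-! ### Functional equations of the quadruple sums -/

section Field

variable {K : Type*} [Field K]

/-- A power series with constant term `0` fixed by `z ↦ t z` vanishes. -/
lemma eq_zero_of_rescale {t : K} (ht : Generic t) {f : K⟦X⟧} (h0 : constantCoeff f = 0)
    (h : f = rescale t f) : f = 0 := by
  ext m
  cases m with
  | zero => simpa using h0
  | succ m =>
    have h1 := congrArg (coeff (m + 1)) h
    rw [coeff_rescale] at h1
    have h2 : (1 - t ^ (m + 1)) * coeff (m + 1) f = 0 := by linear_combination h1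
    simpa using (mul_eq_zero.1 h2).resolve_left (ht.pow m)

/-- The generating function attached to the profile `(3,2,0)`. -/
noncomputable def genB (t : K) : K⟦X⟧ := gen t 0 1 0 1 + gen t 1 0 1 0 - gen t 1 1 0 0

lemma constantCoeff_gen (t : K) (a b c d : ℤ) : constantCoeff (gen t a b c d) = 1 := by
  rw [← coeff_zero_eq_constantCoeff_apply]
  simp [gen, lev, tri_zero, poc]

lemma rescale_C' (t x : K) : rescale t (C x) = C x := by
  ext n
  rw [coeff_rescale, coeff_C]
  split_ifs with h <;> simp [h]

/-- Like `relX`, `relA` and `relY` below, this is a relation `Δ = 0` between the quadruple sums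
which a Corteel-Welsh equation reduces to. The combination of contiguous relations exhibits
`Δ(z) = Δ(t z)`; as `Δ(0) = 0`, this forces `Δ = 0`. -/
lemma relB {t : K} (ht : Generic t) :
    rescale t (genB t) = gen t 0 1 1 1 - C t * X * gen t 2 0 1 0 - C t ^ 2 * X * gen t 3 1 1 1 := by
  rw [← sub_eq_zero]
  apply eq_zero_of_rescale ht
  · simp [genB, constantCoeff_gen, rescale_gen ht]
  simp only [genB, map_sub, map_add, map_mul, map_pow, rescale_gen ht, rescale_X, rescale_C']
  have h1 := gen1 ht 0 1 1 0
  have h2 := gen1 ht 1 2 1 1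
  have h3 := gen2 ht 1 (-1) 1 (-1)
  have h4 := gen2 ht 1 (-1) 1 0
  have h5 := gen2 ht 2 (-1) 1 (-1)
  have h6 := gen2 ht 2 (-1) 1 0
  have h7 := gen4 ht 1 (-1) 1 (-1)
  have h8 := gen4 ht 1 0 0 (-1)
  have h9 := gen4 ht 1 1 1 (-1)
  have h10 := gen4 ht 2 (-1) 1 (-1)
  have h11 := gen4 ht 2 0 0 (-1)
  have h12 := gen4 ht 2 0 1 (-1)
  norm_num at h1 h2 h3 h4 h5 h6 h7 h8 h9 h10 h11 h12 ⊢
  linear_combination -h1 - h2 - h3 + h4 + h5 - h6 + h7 - h8 - h9 - h10 + h11 + h12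

lemma relX {t : K} (ht : Generic t) :
    genB t = gen t 0 0 1 0 + gen t 1 0 1 0 - gen t 1 0 0 0 - C t * X * gen t 1 1 1 1 := by
  rw [← sub_eq_zero]
  apply eq_zero_of_rescale ht
  · simp [genB, constantCoeff_gen]
  simp only [genB, map_sub, map_add, map_mul, rescale_gen ht, rescale_X, rescale_C']
  have h1 := gen1 ht (-1) 2 1 1
  have h2 := gen2 ht 0 0 1 0
  have h3 := gen2 ht 1 (-1) 0 (-1)
  have h4 := gen2 ht 1 (-1) 0 0
  have h5 := gen2 ht 1 0 1 (-1)
  have h6 := gen3 ht 1 0 (-1) (-1)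
  have h7 := gen3 ht 1 0 (-1) 0
  have h8 := gen4 ht 1 (-1) 0 (-1)
  have h9 := gen4 ht 1 0 0 (-1)
  norm_num at h1 h2 h3 h4 h5 h6 h7 h8 h9 ⊢
  linear_combination -C t * h1 - h2 + h3 - h4 + h5 + h6 - h7 - h8 + h9

lemma relA {t : K} (ht : Generic t) :
    gen t 0 0 1 0 = gen t 1 0 0 0 + C t * X * gen t 2 0 0 0 + C t * X * gen t 1 1 1 1
      + C t ^ 2 * X * gen t 3 0 1 0 + C t ^ 3 * X * gen t 4 1 1 1 := by
  rw [← sub_eq_zero]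
  apply eq_zero_of_rescale ht
  · simp [constantCoeff_gen]
  simp only [map_sub, map_add, map_mul, map_pow, rescale_gen ht, rescale_X, rescale_C']
  have h1 := gen1 ht (-1) 2 1 1
  have h2 := gen1 ht 0 1 0 0
  have h3 := gen1 ht 1 1 1 0
  have h4 := gen1 ht 2 2 1 1
  have h5 := gen2 ht 0 0 1 0
  have h6 := gen2 ht 1 0 1 (-1)
  have h7 := gen2 ht 2 (-1) 1 (-1)
  have h8 := gen2 ht 2 (-1) 1 0
  have h9 := gen4 ht 1 0 1 (-1)
  have h10 := gen4 ht 2 (-1) 1 (-1)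
  have h11 := gen4 ht 2 1 1 (-1)
  have h12 := gen4 ht 3 0 1 (-1)
  norm_num at h1 h2 h3 h4 h5 h6 h7 h8 h9 h10 h11 h12 ⊢
  linear_combination C t * h1 + h2 + h3 + h4 + h5 - h6 + h7 - h8 + h9 - h10 + h11 - h12

lemma relY {t : K} (ht : Generic t) :
    gen t 0 0 0 0 = gen t 1 0 1 0 + gen t 1 0 0 0 - (1 - C t * X) * gen t 2 0 0 0
      + C t * X * rescale t (genB t) := by
  rw [← sub_eq_zero]
  apply eq_zero_of_rescale ht
  · simp [constantCoeff_gen]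
  simp only [genB, map_sub, map_add, map_mul, map_one, rescale_gen ht, rescale_X,
    rescale_C']
  have h1 := gen1 ht (-1) 2 0 1
  have h2 := gen1 ht 0 1 0 0
  have h3 := gen1 ht 0 1 1 0
  have h4 := gen1 ht 0 2 0 0
  have h5 := gen2 ht 0 0 0 0
  have h6 := gen2 ht 1 0 0 (-1)
  have h7 := gen2 ht 2 (-1) 0 (-1)
  have h8 := gen2 ht 2 (-1) 0 0
  have h9 := gen3 ht 0 1 (-1) 0
  have h10 := gen3 ht 1 (-1) (-1) (-1)
  have h11 := gen3 ht 1 (-1) (-1) 0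
  have h12 := gen3 ht 1 0 (-1) 1
  have h13 := gen3 ht 1 1 (-1) (-1)
  have h14 := gen3 ht 2 0 (-1) (-1)
  have h15 := gen4 ht 1 (-1) (-1) (-1)
  have h16 := gen4 ht 1 (-1) 0 (-1)
  have h17 := gen4 ht 1 (-1) 1 (-1)
  have h18 := gen4 ht 2 (-1) 0 (-1)
  norm_num at h1 h2 h3 h4 h5 h6 h7 h8 h9 h10 h11 h12 h13 h14 h15 h16 h17 h18 ⊢
  linear_combination C t * h1 + h2 + h3 - h4 + h5 - h6 + h7 - h8 + h9 + h10 - h11 - h12 - h13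
    + h14 - h15 + h16 + h17 - h18

end Field

/-! ### The Corteel-Welsh system and its solution by quadruple sums -/

section Field

variable {K : Type*} [Field K]

/-- The seven rank 3, level 5 profiles, up to rotation. -/
inductive Profile
  | p500 | p410 | p401 | p320 | p302 | p311 | p221

instance : Finite Profile :=
  .of_surjective ![.p500, .p410, .p401, .p320, .p302, .p311, .p221] (by
    rintro (_ | _ | _ | _ | _ | _ | _)
    exacts [⟨0, rfl⟩, ⟨1, rfl⟩, ⟨2, rfl⟩, ⟨3, rfl⟩, ⟨4, rfl⟩, ⟨5, rfl⟩, ⟨6, rfl⟩])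

/-- The Corteel-Welsh system for rank 3 and level 5, where `X` is the variable `z`. It is written
for `F c = H c / (1 - z)`, with `H c` the generating function of the cylindric partitions of profile
`c` in which `z` marks the largest entry; the equations then have no denominators, and only
`rescale t`, the substitution `z ↦ t z`, occurs in them. -/
structure Cylindric (t : K) (F : Profile → K⟦X⟧) : Prop where
  one : ∀ c, constantCoeff (F c) = 1
  e500 : (1 - X) * F .p500 = rescale t (F .p410)
  e410 : (1 - X) * F .p410 = rescale t (F .p320 + F .p401) - rescale t (rescale t (F .p311))
  e401 : (1 - X) * F .p401 = rescale t (F .p311 + F .p500) - rescale t (rescale t (F .p410))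
  e320 : (1 - X) * F .p320 = rescale t (F .p302 + F .p311) - rescale t (rescale t (F .p221))
  e302 : (1 - X) * F .p302 = rescale t (F .p221 + F .p401) - rescale t (rescale t (F .p311))
  e311 : (1 - X) * F .p311 = rescale t (F .p221 + F .p302 + F .p410)
    - rescale t (rescale t (F .p221 + F .p401 + F .p320))
    + rescale t (rescale t (rescale t (F .p311)))
  e221 : (1 - X) * F .p221 = rescale t (F .p311 + F .p221 + F .p320)
    - rescale t (rescale t (F .p221 + F .p311 + F .p302))
    + rescale t (rescale t (rescale t (F .p221)))

/-- Euler's series `∑ z^n/(t;t)_n`, that is `1/(z;t)_∞`. -/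
noncomputable def euler (t : K) : K⟦X⟧ := PowerSeries.mk fun n => (poc t n)⁻¹

lemma rescale_euler {t : K} (ht : Generic t) : rescale t (euler t) = (1 - X) * euler t := by
  ext n
  rw [coeff_rescale, sub_mul, one_mul, map_sub, euler]
  cases n with
  | zero => simp
  | succ n =>
    rw [coeff_succ_X_mul, coeff_mk, coeff_mk]
    have hp : poc t (n + 1) = poc t n * (1 - t ^ (n + 1)) := Finset.prod_range_succ _ _
    have := poc_ne ht n
    have := ht.pow n
    rw [hp]
    field_simp
    ring

/-- The combinations of quadruple sums which solve the Corteel-Welsh system once they are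
multiplied by `euler t`. -/
noncomputable def sol (t : K) : Profile → K⟦X⟧
  | .p500 => gen t 1 1 1 1
  | .p410 => gen t 0 1 1 1
  | .p401 => gen t 1 0 1 0 + C t * X * gen t 2 1 1 1
  | .p320 => genB t
  | .p302 => gen t 1 0 0 0 + C t * X * gen t 2 0 1 0 + C t ^ 2 * X * gen t 3 1 1 1
  | .p311 => gen t 0 0 1 0
  | .p221 => gen t 0 0 0 0

lemma cylindric_sol {t : K} (ht : Generic t) : Cylindric t fun c => sol t c * euler t := by
  have hE := rescale_euler ht
  have hB := relB ht
  have hB2 := congrArg (rescale t) hB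
  have hX := relX ht
  have hX1 := congrArg (rescale t) hX
  have hA := relA ht
  have hA1 := congrArg (rescale t) hA
  have hY := relY ht
  simp only [map_sub, map_add, map_mul, map_pow, rescale_gen ht, rescale_X,
    rescale_C'] at hB2 hX1 hA1
  norm_num at hB2 hX1 hA1
  have hc : constantCoeff (euler t) = 1 := by
    rw [← coeff_zero_eq_constantCoeff_apply]; simp [euler, poc]
  constructor
  · rintro (_ | _ | _ | _ | _ | _ | _) <;> simp [sol, genB, hc, constantCoeff_gen]
  all_goals
    simp only [sol, map_sub, map_add, map_mul, map_pow, map_one, rescale_gen ht, rescale_X,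
      rescale_C', hE]
    norm_num
  · ring
  · linear_combination -(1 - X) * euler t * hB
  · ring
  · linear_combination (1 - X) * euler t * (hX + hA)
  · ring
  · linear_combination (1 - X) * euler t * hA + (1 - X) * (1 - C t * X) * euler t * hB2
  · linear_combination (1 - X) * euler t * hY - (1 - X) * (1 - C t * X) * euler t * (hX1 + hA1)

end Field

/-! ### Finite theta sums -/

section Field

variable {K : Type*} [Field K]

/-- The nontrivial quadratic character modulo `3`. -/
def chi (d : ℤ) : ℤ := if d % 3 = 1 then 1 else if d % 3 = 2 then -1 else 0

/-- The quadratic exponent of the theta sum; the division is exact whenever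
`chi (y - x + 1) ≠ 0`. -/
def quad (x y : ℤ) : ℤ := 8 * (x ^ 2 + x * y + y ^ 2 - 2 * x - y) / 3

lemma chi_cases (d : ℤ) : (d % 3 = 0 ∧ chi d = 0) ∨ (d % 3 = 1 ∧ chi d = 1) ∨
    (d % 3 = 2 ∧ chi d = -1) := by
  have : d % 3 = 0 ∨ d % 3 = 1 ∨ d % 3 = 2 := by omega
  rcases this with h | h | h <;> simp [chi, h]

lemma three_quad {x y : ℤ} (h : chi (y - x + 1) ≠ 0) :
    3 * quad x y = 8 * (x ^ 2 + x * y + y ^ 2 - 2 * x - y) := by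
  have h3 : (y - x + 1) % 3 ≠ 0 := by
    rcases chi_cases (y - x + 1) with ⟨_, h'⟩ | ⟨h', _⟩ | ⟨h', _⟩ <;> omega
  have e : x ^ 2 + x * y + y ^ 2 - 2 * x - y
      = 3 * (x ^ 2 + x * (y - x - 1)) + (y - x - 1) * (y - x) := by ring
  have : (3 : ℤ) ∣ (y - x - 1) * (y - x) := by
    rcases (by omega : (y - x) % 3 = 1 ∨ (y - x) % 3 = 0) with h | h
    · exact Dvd.dvd.mul_right (by omega) _
    · exact Dvd.dvd.mul_left (by omega) _
  obtain ⟨k, hk⟩ := this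
  unfold quad
  rw [e, hk]
  omega

/-- Summand of the theta sum: the lattice point is `(v₁, v₂, -v₁ - v₂)`. -/
def thTerm (t : K) (n l₁ l₂ l₃ : ℤ) (v : ℤ × ℤ) : K :=
  chi (v.2 - v.1 + 1) * t ^ (quad v.1 v.2 + v.1 * l₁ + v.2 * l₂ - (v.1 + v.2) * l₃) *
    (rp t (n + v.1) * rp t (n + v.2) * rp t (n - v.1 - v.2))

lemma thTerm_support (t : K) (n l₁ l₂ l₃ : ℤ) :
    Function.support (thTerm t n l₁ l₂ l₃) ⊆
      (Finset.Icc (-n) (2 * n) ×ˢ Finset.Icc (-n) (2 * n) : Finset (ℤ × ℤ)) := by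
  rintro ⟨x, y⟩ h
  by_contra hn
  apply h
  by_cases h1 : n + x < 0
  · simp [thTerm, rp_neg t h1]
  by_cases h2 : n + y < 0
  · simp [thTerm, rp_neg t h2]
  by_cases h3 : n - x - y < 0
  · simp [thTerm, rp_neg t h3]
  simp only [Finset.coe_product, Finset.coe_Icc, Set.mem_prod, Set.mem_Icc] at hn
  omega

/-- The finite theta sum attached to `(l₁, l₂, l₃)`. -/
noncomputable def th (t : K) (n l₁ l₂ l₃ : ℤ) : K := ∑ᶠ v, thTerm t n l₁ l₂ l₃ v

/-- The sum only depends on the differences of the parameters, as the coordinates of a lattice point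
add up to `0`. -/
lemma th_shift (t : K) (n l₁ l₂ l₃ k : ℤ) :
    th t n (l₁ + k) (l₂ + k) (l₃ + k) = th t n l₁ l₂ l₃ := by
  refine finsum_congr fun v => ?_
  unfold thTerm
  congr 3
  ring

/-- The cyclic symmetry of the parameters; the shift `8 = 5 + 3` is the level plus the rank. -/
lemma th_rot (t : K) (n l₁ l₂ l₃ : ℤ) : th t n (l₃ + 8) l₁ l₂ = th t n l₁ l₂ l₃ := by
  -- the substitution `(v₁, v₂, v₃) ↦ (v₂, v₃, v₁)`
  let e : ℤ × ℤ ≃ ℤ × ℤ :=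
    { toFun := fun v => (v.2, -v.1 - v.2)
      invFun := fun v => (-v.1 - v.2, v.1)
      left_inv := fun v => by ext <;> simp; ring
      right_inv := fun v => by ext <;> simp }
  rw [th, th, ← finsum_comp_equiv e (f := thTerm t n l₁ l₂ l₃)]
  refine finsum_congr fun v => ?_
  obtain ⟨x, y⟩ := v
  simp only [thTerm, e, Equiv.coe_fn_mk]
  have hc : chi (-x - y - y + 1) = chi (y - x + 1) := by
    unfold chi
    rw [show (-x - y - y + 1) % 3 = (y - x + 1) % 3 by omega]
  by_cases h : chi (y - x + 1) = 0
  · rw [hc, h]; simp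
  have h1 := three_quad h
  have h2 := three_quad (x := y) (y := -x - y) (by rwa [hc])
  have hq : quad y (-x - y) = quad x y + 8 * x := by linarith
  rw [hc, hq, show n - y - (-x - y) = n + x by ring, show n + (-x - y) = n - x - y by ring,
    show quad x y + 8 * x + y * l₁ + (-x - y) * l₂ - (y + (-x - y)) * l₃
      = quad x y + x * (l₃ + 8) + y * l₁ - (x + y) * l₂ by ring]
  ring

/-- With `T₁` the shift `l₁ ↦ l₁ + 1`, the operator `1 - t^n T₁` lowers `n` by one in the first of
the three reciprocal factors. -/
lemma thTerm_one {t : K} (ht : Generic t) (n l₁ l₂ l₃ : ℤ) (v : ℤ × ℤ) :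
    thTerm t n l₁ l₂ l₃ v - t ^ n * thTerm t n (l₁ + 1) l₂ l₃ v =
      chi (v.2 - v.1 + 1) * t ^ (quad v.1 v.2 + v.1 * l₁ + v.2 * l₂ - (v.1 + v.2) * l₃) *
        (rp t (n - 1 + v.1) * rp t (n + v.2) * rp t (n - v.1 - v.2)) := by
  have h := rp_pred ht (n + v.1)
  rw [show n + v.1 - 1 = n - 1 + v.1 by ring] at h
  rw [thTerm, thTerm, h,
    show quad v.1 v.2 + v.1 * (l₁ + 1) + v.2 * l₂ - (v.1 + v.2) * l₃
      = quad v.1 v.2 + v.1 * l₁ + v.2 * l₂ - (v.1 + v.2) * l₃ + v.1 by ring,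
    zpow_add₀ ht.ne _ v.1, zpow_add₀ ht.ne n]
  ring

/-- The wall relation: for `l₁ = l₂` the operator `1 - t^n T₁` annihilates the sum, because it turns
the summand into one that is antisymmetric under a reflection of the lattice. -/
lemma th_wall [CharZero K] {t : K} (ht : Generic t) (n l l₃ : ℤ) :
    th t n l l l₃ = t ^ n * th t n (l + 1) l l₃ := by
  -- the reflection `(v₁, v₂, v₃) ↦ (v₂ + 1, v₁ - 1, v₃)`
  let e : ℤ × ℤ ≃ ℤ × ℤ :=
    { toFun := fun v => (v.2 + 1, v.1 - 1)
      invFun := fun v => (v.2 + 1, v.1 - 1)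
      left_inv := fun v => by ext <;> simp
      right_inv := fun v => by ext <;> simp }
  have fin := fun l' : ℤ => (Finset.finite_toSet _).subset (thTerm_support t n l' l l₃)
  rw [← sub_eq_zero, th, th, mul_finsum, ← finsum_sub_distrib (fin l)
    ((fin (l + 1)).subset (Function.support_mul_subset_right _ _))]
  simp_rw [thTerm_one ht]
  set f : ℤ × ℤ → K := fun v => chi (v.2 - v.1 + 1) *
    t ^ (quad v.1 v.2 + v.1 * l + v.2 * l - (v.1 + v.2) * l₃) *
        (rp t (n - 1 + v.1) * rp t (n + v.2) * rp t (n - v.1 - v.2)) with hf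
  have key : ∀ v, f (e v) = - f v := by
    rintro ⟨x, y⟩
    simp only [hf, e, Equiv.coe_fn_mk]
    have hc : chi (x - 1 - (y + 1) + 1) = - chi (y - x + 1) := by
      rcases chi_cases (x - 1 - (y + 1) + 1) with ⟨a, b⟩ | ⟨a, b⟩ | ⟨a, b⟩ <;>
      rcases chi_cases (y - x + 1) with ⟨c, d⟩ | ⟨c, d⟩ | ⟨c, d⟩ <;> omega
    by_cases h : chi (y - x + 1) = 0
    · rw [hc, h]; simp
    have h1 := three_quad h
    have h2 := three_quad (x := y + 1) (y := x - 1) (by rw [hc]; simpa using h)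
    have hq : quad (y + 1) (x - 1) = quad x y := by linarith
    rw [hc, hq, show n - 1 + (y + 1) = n + y by ring, show n + (x - 1) = n - 1 + x by ring,
      show n - (y + 1) - (x - 1) = n - x - y by ring,
      show quad x y + (y + 1) * l + (x - 1) * l - (y + 1 + (x - 1)) * l₃
        = quad x y + x * l + y * l - (x + y) * l₃ by ring]
    push_cast
    ring
  have h1 : ∑ᶠ v, f v = - ∑ᶠ v, f v := by
    rw [← finsum_neg_distrib, ← finsum_comp_equiv e]
    exact finsum_congr key
  exact self_eq_neg.1 h1

/-- The recurrence in `n`: applying all three operators `1 - t^n Tᵢ`, where `Tᵢ` raises `lᵢ`,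
lowers `n` by one. -/
lemma th_rec {t : K} (ht : Generic t) (n l₁ l₂ l₃ : ℤ) :
    th t (n - 1) l₁ l₂ l₃ = th t n l₁ l₂ l₃
      - t ^ n * (th t n (l₁ + 1) l₂ l₃ + th t n l₁ (l₂ + 1) l₃ + th t n l₁ l₂ (l₃ + 1))
      + (t ^ n) ^ 2 * (th t n (l₁ + 1) (l₂ + 1) l₃ + th t n (l₁ + 1) l₂ (l₃ + 1)
        + th t n l₁ (l₂ + 1) (l₃ + 1))
      - (t ^ n) ^ 3 * th t n (l₁ + 1) (l₂ + 1) (l₃ + 1) := by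
  obtain ⟨B, hB⟩ : ∃ B : Finset (ℤ × ℤ), ∀ a b c, ∀ k ∈ ({n, n - 1} : Set ℤ),
      th t k a b c = ∑ v ∈ B, thTerm t k a b c v := by
    refine ⟨Finset.Icc (-n) (2 * n) ×ˢ Finset.Icc (-n) (2 * n), fun a b c k hk => ?_⟩
    refine finsum_eq_sum_of_support_subset _ ((thTerm_support t k a b c).trans ?_)
    intro v
    simp only [Set.mem_insert_iff, Set.mem_singleton_iff] at hk
    simp only [Finset.coe_product, Finset.coe_Icc, Set.mem_prod, Set.mem_Icc]
    omega
  simp only [hB _ _ _ n (by simp), hB _ _ _ (n - 1) (by simp), Finset.mul_sum,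
    ← Finset.sum_add_distrib, ← Finset.sum_sub_distrib]
  refine Finset.sum_congr rfl fun v _ => ?_
  obtain ⟨x, y⟩ := v
  have h1 := rp_pred ht (n + x)
  have h2 := rp_pred ht (n + y)
  have h3 := rp_pred ht (n - x - y)
  simp only [thTerm]
  rw [show n - 1 + x = n + x - 1 by ring, show n - 1 + y = n + y - 1 by ring,
    show n - 1 - x - y = n - x - y - 1 by ring, h1, h2, h3]
  set N := quad x y + x * l₁ + y * l₂ - (x + y) * l₃ with hN
  have e : ∀ a b c : ℤ, quad x y + x * (l₁ + a) + y * (l₂ + b) - (x + y) * (l₃ + c)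
      = N + a * x + b * y - c * x - c * y := by intros; rw [hN]; ring
  have e1 := e 1 0 0
  have e2 := e 0 1 0
  have e3 := e 0 0 1
  have e4 := e 1 1 0
  have e5 := e 1 0 1
  have e6 := e 0 1 1
  have e7 := e 1 1 1
  simp only [add_zero, one_mul, zero_mul, sub_zero] at e1 e2 e3 e4 e5 e6 e7
  rw [e1, e2, e3, e4, e5, e6, e7]
  simp only [zpow_add₀ ht.ne, zpow_sub₀ ht.ne]
  have hx := zpow_ne_zero x ht.ne
  have hy := zpow_ne_zero y ht.ne
  generalize t ^ N = a
  generalize t ^ x = X at *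
  generalize t ^ y = Y at *
  generalize t ^ n = M at *
  field_simp
  ring

end Field

/-! ### The solution of the Corteel-Welsh system by theta sums -/

section Field

variable {K : Type*} [Field K]

lemma th_neg (t : K) (l₁ l₂ l₃ : ℤ) : th t (-1) l₁ l₂ l₃ = 0 := by
  rw [th, finsum_eq_zero_of_forall_eq_zero]
  intro v
  by_contra h
  have := thTerm_support t (-1) l₁ l₂ l₃ h
  simp at this

lemma th_zero (t : K) (l₁ l₂ l₃ : ℤ) : th t 0 l₁ l₂ l₃ = 1 := by
  rw [th, finsum_eq_single _ (0, 0)]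
  · simp [thTerm, chi, quad, rp, poc]
  · intro v hv
    by_contra h
    have := thTerm_support t 0 l₁ l₂ l₃ h
    simp at this
    exact hv (by ext <;> simp [this])

/-- The generating function in `z` of the finite theta sums. -/
noncomputable def thGen (t : K) (l₁ l₂ l₃ : ℤ) : K⟦X⟧ :=
  PowerSeries.mk fun n => th t n l₁ l₂ l₃

lemma thGen_shift (t : K) (l₁ l₂ l₃ k : ℤ) :
    thGen t (l₁ + k) (l₂ + k) (l₃ + k) = thGen t l₁ l₂ l₃ := by
  simp only [thGen, th_shift]

lemma thGen_rot (t : K) (l₁ l₂ l₃ : ℤ) : thGen t (l₃ + 8) l₁ l₂ = thGen t l₁ l₂ l₃ := by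
  simp only [thGen, th_rot]

lemma thGen_wall [CharZero K] {t : K} (ht : Generic t) (l l₃ : ℤ) :
    thGen t l l l₃ = rescale t (thGen t (l + 1) l l₃) := by
  ext n
  rw [coeff_rescale, thGen, thGen, coeff_mk, coeff_mk, th_wall ht, zpow_natCast]

lemma thGen_wall' [CharZero K] {t : K} (ht : Generic t) (l₁ l : ℤ) :
    thGen t l₁ l l = rescale t (thGen t l₁ (l + 1) l) := by
  rw [← thGen_rot, ← thGen_rot, thGen_wall ht, show l + 8 + 1 = (l + 1) + 8 by ring, thGen_rot,
    thGen_rot]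

lemma thGen_rec {t : K} (ht : Generic t) (l₁ l₂ l₃ : ℤ) :
    X * thGen t l₁ l₂ l₃ = thGen t l₁ l₂ l₃
      - rescale t (thGen t (l₁ + 1) l₂ l₃ + thGen t l₁ (l₂ + 1) l₃ + thGen t l₁ l₂ (l₃ + 1))
      + rescale t (rescale t (thGen t (l₁ + 1) (l₂ + 1) l₃ + thGen t (l₁ + 1) l₂ (l₃ + 1)
        + thGen t l₁ (l₂ + 1) (l₃ + 1)))
      - rescale t (rescale t (rescale t (thGen t l₁ l₂ l₃))) := by
  rw [← thGen_shift t l₁ l₂ l₃ 1]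
  nth_rw 1 2 [thGen_shift t l₁ l₂ l₃ 1]
  ext n
  have h := th_rec ht n l₁ l₂ l₃
  have h0 : coeff n (X * thGen t l₁ l₂ l₃) = th t ((n : ℤ) - 1) l₁ l₂ l₃ := by
    cases n with
    | zero => rw [coeff_zero_X_mul, Nat.cast_zero, zero_sub, th_neg]
    | succ n => rw [coeff_succ_X_mul, thGen, coeff_mk]; push_cast; rw [add_sub_cancel_right]
  rw [h0, h]
  simp only [map_add, map_sub, coeff_rescale, thGen, coeff_mk, zpow_natCast]
  ring

/-- The theta sums solving the Corteel-Welsh system: for the profile `(c₁, c₂, c₃)` the parameters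
satisfy `l₁ - l₂ = c₂ + 1`, `l₂ - l₃ = c₃ + 1` and `l₃ + 8 - l₁ = c₁ + 1`. -/
noncomputable def thSol (t : K) : Profile → K⟦X⟧
  | .p500 => thGen t 2 1 0
  | .p410 => thGen t 3 1 0
  | .p401 => thGen t 3 2 0
  | .p320 => thGen t 4 1 0
  | .p302 => thGen t 4 3 0
  | .p311 => thGen t 4 2 0
  | .p221 => thGen t 5 2 0

lemma thGen_rot' (t : K) (l₁ l₂ l₃ : ℤ) :
    thGen t l₁ l₂ l₃ = thGen t (l₃ + 8 - l₂) (l₁ - l₂) 0 := by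
  rw [← thGen_rot, ← thGen_shift t _ _ _ (-l₂), ← sub_eq_add_neg, ← sub_eq_add_neg,
    add_neg_cancel]

/-- Each equation is the expanded recurrence `thGen_rec`, whose terms outside the range of admissible
parameters are cancelled by wall relations. -/
lemma cylindric_thSol [CharZero K] {t : K} (ht : Generic t) : Cylindric t (thSol t) := by
  have s1 := fun a b => thGen_shift t a b 0 1
  have w1 := fun a b => congrArg (rescale t) (thGen_wall ht a b)
  have w2 := fun a b => congrArg (rescale t) (thGen_wall' ht a b)
  have w1' := fun a b => congrArg (rescale t) (w1 a b)
  have w2' := fun a b => congrArg (rescale t) (w2 a b)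
  have r510 : thGen t 5 1 0 = thGen t 4 3 0 := by
    rw [thGen_rot', thGen_rot']; norm_num
  have r530 : thGen t 5 3 0 = thGen t 5 2 0 := by
    rw [thGen_rot']; norm_num
  have r620 : thGen t 6 2 0 = thGen t 4 2 0 := by
    rw [thGen_rot', thGen_rot']; norm_num
  have r630 : thGen t 6 3 0 = thGen t 5 2 0 := by
    rw [thGen_rot', thGen_rot']; norm_num
  have s421 := s1 3 1
  have s321 := s1 2 1
  have s431 := s1 3 2
  have s521 := s1 4 1
  have s531 := s1 4 2
  have s541 := s1 4 3
  have s621 := s1 5 1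
  norm_num at s321 s421 s431 s521 s531 s541 s621
  constructor
  · rintro (_ | _ | _ | _ | _ | _ | _) <;>
      rw [← coeff_zero_eq_constantCoeff_apply] <;> simp [thSol, thGen, th_zero]
  all_goals simp only [thSol]
  · have h := thGen_rec ht 2 1 0
    have h1 := w1 2 0
    have h2 := w2 2 1
    have h3 := w2' 3 1
    norm_num [s321] at h h1 h2 h3 ⊢
    linear_combination -h + h1 + h2 - h3
  · have h := thGen_rec ht 3 1 0
    have h1 := w2 3 1
    have h2 := w2' 4 1
    norm_num [s321, s421] at h h1 h2 ⊢
    linear_combination -h + h1 - h2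
  · have h := thGen_rec ht 3 2 0
    have h1 := w1 3 0
    have h2 := w1' 3 1
    norm_num [s321, s421, s431] at h h1 h2 ⊢
    linear_combination -h + h1 - h2
  · have h := thGen_rec ht 4 1 0
    have h1 := w2 4 1
    have h2 := w2' 5 1
    norm_num [s321, s421, s431, s521, r510] at h h1 h2 ⊢
    linear_combination -h + h1 - h2
  · have h := thGen_rec ht 4 3 0
    have h1 := w1 4 0
    have h2 := w1' 4 1
    norm_num [s321, s421, s431, s521, r510, s531, r530, s541] at h h1 h2 ⊢
    linear_combination -h + h1 - h2
  · have h := thGen_rec ht 4 2 0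
    norm_num [s321, s421, s431, s521, r510, s531, r530] at h ⊢
    linear_combination -h
  · have h := thGen_rec ht 5 2 0
    norm_num [s321, s421, s431, s521, r510, s531, r530, r620, r630, s621] at h ⊢
    linear_combination -h

end Field

/-! ### Uniqueness of the solution -/

section Laurent

/-- The variable of `ℚ((t))`. -/
noncomputable def tt : LaurentSeries ℚ := HahnSeries.single 1 1

lemma tt_pow (n : ℕ) : tt ^ n = HahnSeries.single (n : ℤ) (1 : ℚ) := by
  rw [tt, HahnSeries.single_pow, one_pow, nsmul_eq_mul, mul_one]

lemma generic_tt : Generic tt := by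
  refine ⟨by simp [tt], fun n h => ?_⟩
  rw [tt_pow, sub_eq_zero] at h
  have := congrArg (fun x => HahnSeries.coeff x 0) h
  simp at this
  rw [HahnSeries.coeff_single_of_ne (by positivity)] at this
  exact one_ne_zero this

instance : CharZero (LaurentSeries ℚ) :=
  charZero_of_injective_ringHom (HahnSeries.C_injective (Γ := ℤ) (R := ℚ))

/-- The Laurent series `x` has no terms of degree below `i`. -/
def Low (x : LaurentSeries ℚ) (i : ℤ) : Prop := ∀ j < i, x.coeff j = 0

lemma Low.add {x y i} (hx : Low x i) (hy : Low y i) : Low (x + y) i := fun j hj => by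
  rw [HahnSeries.coeff_add, hx j hj, hy j hj, add_zero]

lemma Low.sub {x y i} (hx : Low x i) (hy : Low y i) : Low (x - y) i := fun j hj => by
  rw [HahnSeries.coeff_sub, hx j hj, hy j hj, sub_zero]

lemma Low.mul {x : LaurentSeries ℚ} {i} (hx : Low x i) (n : ℕ) :
    Low (tt ^ (n + 1) * x) (i + 1) := fun j hj => by
  rw [tt_pow, ← sub_add_cancel j (((n + 1 : ℕ) : ℤ)), HahnSeries.coeff_single_mul_add,
    hx _ (by push_cast; omega), mul_zero]

/-- The Corteel-Welsh system determines its solution: by induction on the degree in `z` the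
difference of two solutions satisfies a homogeneous system whose coefficients are multiples of
`t`, so it vanishes to every order in `t`. -/
lemma Cylindric.unique {F G : Profile → (LaurentSeries ℚ)⟦X⟧} (hF : Cylindric tt F)
    (hG : Cylindric tt G) : F = G := by
  suffices h : ∀ n c, coeff n (F c) - coeff n (G c) = 0 by
    funext c
    ext1 n
    exact sub_eq_zero.1 (h n c)
  intro n
  induction n with
  | zero =>
    intro c
    rw [coeff_zero_eq_constantCoeff_apply, coeff_zero_eq_constantCoeff_apply, hF.one, hG.one,
      sub_self]
  | succ n ih =>
    set d : Profile → LaurentSeries ℚ := fun c => coeff (n + 1) (F c) - coeff (n + 1) (G c) with hd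
    set T := tt ^ (n + 1) with hT
    -- each equation raises the `t`-order of the differences by at least one
    have key : ∀ i, (∀ c, Low (d c) i) → ∀ c, Low (d c) (i + 1) := by
      intro i hi
      have e : ∀ c, d c = (coeff (n + 1) ((1 - X) * F c) - coeff (n + 1) ((1 - X) * G c)) := by
        intro c
        have := ih c
        simp only [sub_mul, one_mul, map_sub, coeff_succ_X_mul]
        linear_combination this
      have m : ∀ c, Low (T * d c) (i + 1) := fun c => (hi c).mul n
      have m' : ∀ c, Low (T * d c) i := fun c j hj => m c j (by omega)
      have m2 : ∀ c, Low (T * (T * d c)) (i + 1) := fun c => (m' c).mul n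
      have m2' : ∀ c, Low (T * (T * d c)) i := fun c j hj => m2 c j (by omega)
      have m3 : ∀ c, Low (T * (T * (T * d c))) (i + 1) := fun c => (m2' c).mul n
      have d500 : d .p500 = T * d .p410 := by
        refine (e _).trans ?_
        rw [hF.e500, hG.e500]
        simp only [coeff_rescale]
        ring
      have d410 : d .p410 = T * d .p320 + T * d .p401 - T * (T * d .p311) := by
        refine (e _).trans ?_
        rw [hF.e410, hG.e410]
        simp only [map_add, map_sub, coeff_rescale]
        ring
      have d401 : d .p401 = T * d .p311 + T * d .p500 - T * (T * d .p410) := by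
        refine (e _).trans ?_
        rw [hF.e401, hG.e401]
        simp only [map_add, map_sub, coeff_rescale]
        ring
      have d320 : d .p320 = T * d .p302 + T * d .p311 - T * (T * d .p221) := by
        refine (e _).trans ?_
        rw [hF.e320, hG.e320]
        simp only [map_add, map_sub, coeff_rescale]
        ring
      have d302 : d .p302 = T * d .p221 + T * d .p401 - T * (T * d .p311) := by
        refine (e _).trans ?_
        rw [hF.e302, hG.e302]
        simp only [map_add, map_sub, coeff_rescale]
        ring
      have d311 : d .p311 = T * d .p221 + T * d .p302 + T * d .p410
          - (T * (T * d .p221) + T * (T * d .p401) + T * (T * d .p320))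
          + T * (T * (T * d .p311)) := by
        refine (e _).trans ?_
        rw [hF.e311, hG.e311]
        simp only [map_add, map_sub, coeff_rescale]
        ring
      have d221 : d .p221 = T * d .p311 + T * d .p221 + T * d .p320
          - (T * (T * d .p221) + T * (T * d .p311) + T * (T * d .p302))
          + T * (T * (T * d .p221)) := by
        refine (e _).trans ?_
        rw [hF.e221, hG.e221]
        simp only [map_add, map_sub, coeff_rescale]
        ring
      rintro (_ | _ | _ | _ | _ | _ | _)
      · rw [d500]; exact m _
      · rw [d410]; exact ((m _).add (m _)).sub (m2 _)
      · rw [d401]; exact ((m _).add (m _)).sub (m2 _)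
      · rw [d320]; exact ((m _).add (m _)).sub (m2 _)
      · rw [d302]; exact ((m _).add (m _)).sub (m2 _)
      · rw [d311]
        exact ((((m _).add (m _)).add (m _)).sub (((m2 _).add (m2 _)).add (m2 _))).add (m3 _)
      · rw [d221]
        exact ((((m _).add (m _)).add (m _)).sub (((m2 _).add (m2 _)).add (m2 _))).add (m3 _)
    -- the orders of the seven Laurent series have a common lower bound, where the induction starts
    obtain ⟨M, hM⟩ : ∃ M : ℤ, ∀ c, M ≤ (d c).order := by
      obtain ⟨M, hM⟩ := (Set.finite_range fun c => (d c).order).bddBelow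
      exact ⟨M, fun c => hM ⟨c, rfl⟩⟩
    have all : ∀ k : ℕ, ∀ c, Low (d c) (M + k) := by
      intro k
      induction k with
      | zero =>
        intro c j hj
        exact HahnSeries.coeff_eq_zero_of_lt_order (by have := hM c; push_cast at hj; omega)
      | succ k ih =>
        have := key _ ih
        push_cast
        rwa [← add_assoc]
    intro c
    ext j
    exact all (j - M + 1).toNat c j (by omega)

/-- The coefficient of `z^n` in the equality of the two solutions at the profile `(4,1,0)`. -/
lemma finite_identity (n : ℕ) :
    ∑ p ∈ Finset.HasAntidiagonal.antidiagonal n, lev tt 0 1 1 1 p.1 * (poc tt p.2)⁻¹ =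
      th tt n 3 1 0 := by
  have h := congrFun ((cylindric_sol generic_tt).unique (cylindric_thSol generic_tt)) .p410
  have h := congrArg (coeff n) h
  simpa [sol, thSol, coeff_mul, gen, euler, thGen] using h

end Laurent

/-! ### The finite identity over power series -/

section Transfer

/-- The summand of the quadruple sum. -/
noncomputable def summand (n₁ n₂ n₃ n₄ : ℕ) : ℚ⟦X⟧ :=
  q ^ (n₁ ^ 2 + n₂ ^ 2 + n₃ ^ 2 + n₄ ^ 2 + (n₂ + n₃ + n₄) + n₂ * n₄ - n₁ * n₂)
    * (1) * (qPoch n₁)⁻¹ * qBinom n₁ n₂ * qBinom n₁ n₄ * qBinom n₂ n₃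

/-- The index box supporting the summands with `n₁ = m`. -/
def box (m : ℕ) : Finset (ℕ × ℕ × ℕ) :=
  Finset.range (m + 1) ×ˢ Finset.range (m + 1) ×ˢ Finset.range (m + 1)

/-- The part of the quadruple sum with `n₁ = m`. -/
noncomputable def level (m : ℕ) : ℚ⟦X⟧ := ∑ n ∈ box m, summand m n.1 n.2.1 n.2.2

/-- The reciprocal `1/(q;q)_n` for an integer index `n`, with the usual convention that it vanishes
for `n < 0`. -/
noncomputable def rq (n : ℤ) : ℚ⟦X⟧ := if n < 0 then 0 else (qPoch n.toNat)⁻¹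

/-- The embedding of `ℚ⟦q⟧` in `ℚ((t))`. -/
noncomputable abbrev emb : ℚ⟦X⟧ →+* LaurentSeries ℚ := HahnSeries.ofPowerSeries ℤ ℚ

lemma emb_inj : Function.Injective emb := HahnSeries.ofPowerSeries_injective

lemma emb_q : emb q = tt := HahnSeries.ofPowerSeries_X

lemma emb_qPoch (n : ℕ) : emb (qPoch n) = poc tt n := by
  simp only [qPoch, poc, map_prod, map_sub, map_one, map_pow, emb_q]

lemma qPoch_const (n : ℕ) : constantCoeff (qPoch n) = 1 := by
  simp [qPoch, q, map_prod]

lemma qPoch_mul_inv (n : ℕ) : qPoch n * (qPoch n)⁻¹ = 1 :=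
  PowerSeries.mul_inv_cancel _ (by rw [qPoch_const]; exact one_ne_zero)

lemma emb_qPoch_inv (n : ℕ) : emb (qPoch n)⁻¹ = (poc tt n)⁻¹ := by
  refine eq_inv_of_mul_eq_one_left ?_
  rw [← emb_qPoch, ← map_mul, mul_comm, qPoch_mul_inv, map_one]

lemma emb_rq (n : ℤ) : emb (rq n) = rp tt n := by
  unfold rq rp
  split_ifs
  · exact map_zero _
  · exact emb_qPoch_inv _

lemma emb_qBinom (m k : ℕ) :
    emb (qBinom m k) = poc tt m * (rp tt k * rp tt ((m : ℤ) - k)) := by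
  unfold qBinom
  split_ifs with h
  · rw [PowerSeries.mul_inv_rev, map_mul, map_mul, emb_qPoch, emb_qPoch_inv, emb_qPoch_inv,
      ← Nat.cast_sub h, rp_nat, rp_nat, mul_comm (poc tt (m - k))⁻¹]
  · rw [rp_neg tt (show (m : ℤ) - k < 0 by omega), mul_zero, mul_zero, map_zero]

lemma emb_summand (m a b c : ℕ) :
    emb (summand m a b c) = poc tt m * term tt 0 1 1 1 m ((a : ℤ), (b : ℤ), (c : ℤ)) := by
  simp only [summand, mul_one, map_mul, map_pow, emb_q, emb_qBinom, emb_qPoch_inv, term, core]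
  by_cases h : a ≤ m
  · have h1 : m * a ≤ m ^ 2 + a ^ 2 + b ^ 2 + c ^ 2 + (a + b + c) + a * c := by nlinarith
    have h2 : ((m ^ 2 + a ^ 2 + b ^ 2 + c ^ 2 + (a + b + c) + a * c - m * a : ℕ) : ℤ)
        = expo 0 1 1 1 m ((a : ℤ), (b : ℤ), (c : ℤ)) := by
      rw [Nat.cast_sub h1, expo]; push_cast; ring
    rw [← zpow_natCast, h2, rp_nat tt a]
    have := poc_ne generic_tt m
    have := poc_ne generic_tt a
    field_simp
  · rw [rp_neg tt (show (m : ℤ) - a < 0 by omega)]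
    ring

lemma emb_level (m : ℕ) : emb (level m) = lev tt 0 1 1 1 m := by
  have hinj : Function.Injective
      fun n : ℕ × ℕ × ℕ => ((n.1 : ℤ), (n.2.1 : ℤ), (n.2.2 : ℤ)) := by
    rintro ⟨a, b, c⟩ ⟨a', b', c'⟩ h
    simpa using h
  have hs : Function.support (term tt 0 1 1 1 m) ⊆ ((box m).map ⟨_, hinj⟩ : Finset _) := by
    rintro ⟨a, b, c⟩ h
    have := core_support tt m (right_ne_zero_of_mul h)
    simp only [Finset.coe_product, Finset.coe_Icc, Set.mem_prod, Set.mem_Icc] at this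
    simp only [Finset.coe_map, Set.mem_image, Finset.mem_coe, box, Finset.mem_product,
      Finset.mem_range, Function.Embedding.coeFn_mk, Prod.mk.injEq]
    exact ⟨(a.toNat, b.toNat, c.toNat), by dsimp only; omega, by dsimp only; omega⟩
  rw [lev, tri, finsum_eq_sum_of_support_subset _ hs, Finset.sum_map, level, map_sum,
    Finset.mul_sum]
  exact Finset.sum_congr rfl fun n _ => emb_summand _ _ _ _

/-- A parametrisation of the lattice points of the theta sum with nonzero character, which splits
the exponent into a pentagonal number and four times a triangular number. -/
def param (p : ℤ × ℤ) : ℤ × ℤ :=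
  if p.1 % 4 = 0 then (p.2 + 3 * (p.1 / 4), p.2 - 3 * (p.1 / 4))
  else if p.1 % 4 = 1 then (-p.2 - 3 * (p.1 / 4), 1 - p.2 + 3 * (p.1 / 4))
  else if p.1 % 4 = 2 then (2 - p.2 + 3 * (p.1 / 4), -1 - p.2 - 3 * (p.1 / 4))
  else (p.2 - 3 * (p.1 / 4) - 2, p.2 + 3 * (p.1 / 4) + 2)

lemma param_cases (p : ℤ × ℤ) : ∃ a : ℤ,
    (p.1 = 4 * a ∧ param p = (p.2 + 3 * a, p.2 - 3 * a)) ∨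
    (p.1 = 4 * a + 1 ∧ param p = (-p.2 - 3 * a, 1 - p.2 + 3 * a)) ∨
    (p.1 = 4 * a + 2 ∧ param p = (2 - p.2 + 3 * a, -1 - p.2 - 3 * a)) ∨
    (p.1 = 4 * a + 3 ∧ param p = (p.2 - 3 * a - 2, p.2 + 3 * a + 2)) := by
  refine ⟨p.1 / 4, ?_⟩
  unfold param
  split_ifs <;> simp only [and_true] <;> omega

lemma param_inj : Function.Injective param := by
  intro p p' h
  obtain ⟨a, h1⟩ := param_cases p
  obtain ⟨b, h2⟩ := param_cases p'
  rw [h] at h1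
  rcases h1 with ⟨h1, h3⟩ | ⟨h1, h3⟩ | ⟨h1, h3⟩ | ⟨h1, h3⟩ <;>
  rcases h2 with ⟨h2, h4⟩ | ⟨h2, h4⟩ | ⟨h2, h4⟩ | ⟨h2, h4⟩ <;>
  (rw [h3, Prod.mk.injEq] at h4; ext <;> omega)

lemma param_surj {v : ℤ × ℤ} (h : chi (v.2 - v.1 + 1) ≠ 0) : v ∈ Set.range param := by
  obtain ⟨x, y⟩ := v
  have h3 : (y - x) % 6 ≠ 2 ∧ (y - x) % 6 ≠ 5 := by
    rcases chi_cases (y - x + 1) with ⟨_, h'⟩ | ⟨h', _⟩ | ⟨h', _⟩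
    · exact absurd h' h
    all_goals omega
  have h6 : (y - x) % 6 = 0 ∨ (y - x) % 6 = 1 ∨ (y - x) % 6 = 3 ∨ (y - x) % 6 = 4 := by omega
  rcases h6 with h | h | h | h
  · refine ⟨(4 * (-((y - x) / 6)), (x + y) / 2), ?_⟩
    rw [param, if_pos (by dsimp only; omega)]
    ext <;> dsimp only <;> omega
  · refine ⟨(4 * ((y - x) / 6) + 1, (1 - x - y) / 2), ?_⟩
    rw [param, if_neg (by dsimp only; omega), if_pos (by dsimp only; omega)]
    ext <;> dsimp only <;> omega
  · refine ⟨(4 * (-((y - x) / 6) - 1) + 2, (1 - x - y) / 2), ?_⟩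
    rw [param, if_neg (by dsimp only; omega), if_neg (by dsimp only; omega),
      if_pos (by dsimp only; omega)]
    ext <;> dsimp only <;> omega
  · refine ⟨(4 * ((y - x) / 6) + 3, (x + y) / 2), ?_⟩
    rw [param, if_neg (by dsimp only; omega), if_neg (by dsimp only; omega),
      if_neg (by dsimp only; omega)]
    ext <;> dsimp only <;> omega

lemma chi_param (p : ℤ × ℤ) :
    chi ((param p).2 - (param p).1 + 1) = Int.negOnePow p.1 := by
  obtain ⟨k, i⟩ := p
  obtain ⟨a, h⟩ := param_cases (k, i)
  rcases h with ⟨h1, h2⟩ | ⟨h1, h2⟩ | ⟨h1, h2⟩ | ⟨h1, h2⟩ <;> dsimp only at h1 <;>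
    rw [h2, h1, chi] <;> dsimp only
  · rw [if_pos (by omega), Int.negOnePow_even _ ⟨2 * a, by ring⟩]; rfl
  · rw [if_neg (by omega), if_pos (by omega), Int.negOnePow_odd _ ⟨2 * a, by ring⟩]; rfl
  · rw [if_pos (by omega), Int.negOnePow_even _ ⟨2 * a + 1, by ring⟩]; rfl
  · rw [if_neg (by omega), if_pos (by omega), Int.negOnePow_odd _ ⟨2 * a + 1, by ring⟩]; rfl

/-- Four times the triangular number `i(2i-1)`, for `i : ℤ`. -/
def fourTri (i : ℤ) : ℕ := (4 * (i * (2 * i - 1))).toNat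

lemma fourTri_cast (i : ℤ) : (fourTri i : ℤ) = 4 * (i * (2 * i - 1)) := by
  rw [fourTri, Int.toNat_of_nonneg]
  rcases le_or_gt i 0 with h | h
  · nlinarith
  · nlinarith

lemma quad_param (p : ℤ × ℤ) :
    quad (param p).1 (param p).2 + (param p).1 * 3 + (param p).2 * 1
      - ((param p).1 + (param p).2) * 0 = ((pentagonal p.1 + fourTri p.2 : ℕ) : ℤ) := by
  have hc : chi ((param p).2 - (param p).1 + 1) ≠ 0 := by
    rw [chi_param]; exact Units.ne_zero _
  have h3 := three_quad hc
  have hp : 2 * (pentagonal p.1 : ℤ) = p.1 * (3 * p.1 - 1) := two_mul_natCast_pentagonal _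
  obtain ⟨a, h⟩ := param_cases p
  rw [Nat.cast_add, fourTri_cast]
  rcases h with ⟨h1, h2⟩ | ⟨h1, h2⟩ | ⟨h1, h2⟩ | ⟨h1, h2⟩ <;> rw [h2] at h3 ⊢ <;>
    rw [h1] at hp ⊢ <;> dsimp only at h3 ⊢ <;> ring_nf at h3 hp ⊢ <;> omega

/-- The sign and power of `q` at the point `p` of the theta sum. -/
noncomputable def thetaMonomial (p : ℤ × ℤ) : ℚ⟦X⟧ :=
  ((Int.negOnePow p.1 : ℤ) : ℚ⟦X⟧) * q ^ (pentagonal p.1 + fourTri p.2)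

/-- The identity `finite_identity` as an identity of power series, with the theta sum written in the
coordinates `param`. -/
lemma finite_identity' (n : ℕ) (B : Finset (ℤ × ℤ))
    (hB : Finset.Icc (-(4 * n + 4) : ℤ) (4 * n + 4) ×ˢ Finset.Icc (-(4 * n + 4) : ℤ) (4 * n + 4)
      ⊆ B) :
    ∑ p ∈ Finset.HasAntidiagonal.antidiagonal n, level p.1 * (qPoch p.2)⁻¹ =
      ∑ p ∈ B, thetaMonomial p * (rq (n + (param p).1) * rq (n + (param p).2) *
        rq (n - (param p).1 - (param p).2)) := by
  apply emb_inj
  have hl : emb (∑ p ∈ Finset.HasAntidiagonal.antidiagonal n, level p.1 * (qPoch p.2)⁻¹)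
      = th tt n 3 1 0 := by
    rw [← finite_identity, map_sum]
    exact Finset.sum_congr rfl fun p _ => by rw [map_mul, emb_level, emb_qPoch_inv]
  have ht : ∀ p, thTerm tt n 3 1 0 (param p) =
      emb (thetaMonomial p * (rq (n + (param p).1) * rq (n + (param p).2) *
        rq (n - (param p).1 - (param p).2))) := by
    intro p
    rw [thTerm, quad_param, chi_param, zpow_natCast, thetaMonomial]
    simp only [map_mul, map_pow, emb_rq, emb_q, map_intCast]
  have hs : Function.support (thTerm tt n 3 1 0) ⊆ (B.map ⟨param, param_inj⟩ : Finset _) := by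
    intro v hv
    obtain ⟨p, rfl⟩ := param_surj (v := v) (by
      intro h0
      apply hv
      rw [thTerm, h0, Int.cast_zero, zero_mul, zero_mul])
    have hm := thTerm_support tt n 3 1 0 hv
    simp only [Finset.coe_product, Finset.coe_Icc, Set.mem_prod, Set.mem_Icc] at hm
    simp only [Finset.coe_map, Set.mem_image, Finset.mem_coe, Function.Embedding.coeFn_mk]
    refine ⟨p, hB ?_, rfl⟩
    rw [Finset.mem_product, Finset.mem_Icc, Finset.mem_Icc]
    obtain ⟨a, h⟩ := param_cases p
    rcases h with ⟨h1, h2⟩ | ⟨h1, h2⟩ | ⟨h1, h2⟩ | ⟨h1, h2⟩ <;> rw [h2] at hm <;>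
      dsimp only at hm <;> omega
  rw [hl, th, finsum_eq_sum_of_support_subset _ hs, Finset.sum_map, map_sum]
  exact Finset.sum_congr rfl fun p _ => ht p

end Transfer

/-! ### Truncations and classical theta identities -/

section Limit

/-- Reduction of power series modulo `q^N`. -/
noncomputable abbrev red (N : ℕ) : ℚ⟦X⟧ →+* ℚ⟦X⟧ ⧸ Ideal.span {(q : ℚ⟦X⟧) ^ N} :=
  Ideal.Quotient.mk _

lemma red_eq_iff {N : ℕ} {a b : ℚ⟦X⟧} :
    red N a = red N b ↔ ∀ d < N, coeff d a = coeff d b := by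
  rw [Ideal.Quotient.eq, Ideal.mem_span_singleton, q, X_pow_dvd_iff]
  simp only [map_sub, sub_eq_zero]

lemma red_q_pow {N j : ℕ} (h : N ≤ j) : red N (q ^ j) = 0 :=
  Ideal.Quotient.eq_zero_iff_mem.2 (Ideal.mem_span_singleton.2 (pow_dvd_pow _ h))

lemma red_qPoch {N n : ℕ} (h : N ≤ n) : red N (qPoch n) = red N (qPoch N) := by
  induction n, h using Nat.le_induction with
  | base => rfl
  | succ n hn ih =>
    rw [qPoch, Finset.prod_range_succ, map_mul, map_sub, red_q_pow (by omega), sub_zero, map_one,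
      mul_one]
    exact ih

lemma red_qPoch_mul_inv (N n : ℕ) : red N (qPoch n) * red N (qPoch n)⁻¹ = 1 := by
  rw [← map_mul, qPoch_mul_inv, map_one]

lemma red_qPoch_inv {N n : ℕ} (h : N ≤ n) : red N (qPoch n)⁻¹ = red N (qPoch N)⁻¹ := by
  have h1 := red_qPoch_mul_inv N n
  have h2 := red_qPoch_mul_inv N N
  rw [red_qPoch h] at h1
  linear_combination red N (qPoch N)⁻¹ * h1 - red N (qPoch n)⁻¹ * h2

lemma red_rq {N : ℕ} {n : ℤ} (h : (N : ℤ) ≤ n) : red N (rq n) = red N (qPoch N)⁻¹ := by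
  rw [rq, if_neg (by omega), red_qPoch_inv (by omega)]

/-- Whenever the summand is nonzero, the exponent of `q` in it is at least `n₁`. -/
lemma red_summand {N m : ℕ} (h : N ≤ m) (a b c : ℕ) : red N (summand m a b c) = 0 := by
  by_cases ha : a ≤ m
  · have h1 : m ≤ m ^ 2 + a ^ 2 + b ^ 2 + c ^ 2 + (a + b + c) + a * c - m * a := by
      apply Nat.le_sub_of_add_le
      obtain ⟨e, rfl⟩ := Nat.exists_eq_add_of_le ha
      have : e ≤ e ^ 2 := Nat.le_self_pow two_ne_zero e
      nlinarith [Nat.zero_le (a * e), Nat.zero_le (a * c), sq_nonneg a]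
    simp only [summand, map_mul]
    rw [red_q_pow (h.trans h1)]
    ring
  · rw [summand, qBinom, if_neg ha]
    simp

lemma red_level {N m : ℕ} (h : N ≤ m) : red N (level m) = 0 := by
  rw [level, map_sum]
  exact Finset.sum_eq_zero fun n _ => red_summand h _ _ _

/-- The truncated index set for bilateral sums. -/
noncomputable def trunc (N : ℕ) : Finset ℤ := Finset.Ioc (-(N + 1) : ℤ) (N + 1)

lemma le_pentagonal {N : ℕ} {k : ℤ} (h : k ∉ trunc N) : N ≤ pentagonal k := by
  have := two_mul_natCast_pentagonal k
  rw [trunc, Finset.mem_Ioc] at h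
  have h' : k ≤ -(N + 1) ∨ (N : ℤ) + 1 < k := by omega
  zify
  rcases h' with h' | h' <;> nlinarith

lemma le_fourTri {N : ℕ} {i : ℤ} (h : i ∉ trunc N) : N ≤ fourTri i := by
  have := fourTri_cast i
  rw [trunc, Finset.mem_Ioc] at h
  have h' : i ≤ -(N + 1) ∨ (N : ℤ) + 1 < i := by omega
  zify
  rcases h' with h' | h' <;> nlinarith

/-- The pentagonal number theorem modulo `q^N`. -/
lemma red_pentagonal (N : ℕ) :
    red N (∑ k ∈ trunc N, ((Int.negOnePow k : ℤ) : ℚ⟦X⟧) * q ^ pentagonal k) =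
      red N (qPoch N) := by
  have h1 : red N (∑ k ∈ trunc N, ((Int.negOnePow k : ℤ) : ℚ⟦X⟧) * q ^ pentagonal k) =
      red N (pentagonalSeries ℚ) := by
    rw [red_eq_iff]
    intro d hd
    have hc : ∀ k : ℤ, coeff d (((Int.negOnePow k : ℤ) : ℚ⟦X⟧) * q ^ pentagonal k) =
        if d = pentagonal k then ((Int.negOnePow k : ℤ) : ℚ) else 0 := by
      intro k
      rw [← map_intCast (C (R := ℚ)), coeff_C_mul, q, coeff_X_pow]
      simp
    rw [map_sum, Finset.sum_congr rfl fun k _ => hc k]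
    by_cases h : d ∈ Set.range pentagonal
    · obtain ⟨k, rfl⟩ := h
      rw [Finset.sum_eq_single k, if_pos rfl, coeff_pentagonalSeries_pentagonal]
      · intro k' _ hk
        exact if_neg fun h => hk (pentagonal_injective h.symm)
      · intro hk
        exact absurd (le_pentagonal hk) (by omega)
    · rw [coeff_pentagonalSeries_eq_zero ℚ h]
      exact Finset.sum_eq_zero fun k _ => if_neg fun hk => h ⟨k, hk.symm⟩
  rw [h1, red_eq_iff]
  intro d hd
  obtain ⟨s, hs⟩ := Filter.eventually_atTop.1 (coeff_prod_one_sub_X_pow_eventually_eq ℚ d)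
  obtain ⟨M, hM⟩ := s.exists_nat_subset_range
  have h2 := hs (Finset.range (max M N)) (hM.trans (Finset.range_mono (le_max_left _ _)))
  rw [← h2]
  exact red_eq_iff.1 (red_qPoch (le_max_right M N)) d hd

/-- Shanks' finite form of Gauss's triangular number identity, for a sequence `P` with
`P (s+1) = P s * (1 - y^(2s+2)) / (1 - y^(2s+1))`. -/
lemma shanks {R : Type*} [CommRing R] [IsDomain R] (y : R) (P I : ℕ → R)
    (hI : ∀ s, P s * I s = 1)
    (hP : ∀ s, P (s + 1) * (1 - y ^ (2 * s + 1)) = P s * (1 - y ^ (2 * s + 2)))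
    (hy : ∀ n, 1 - y ^ (2 * n + 1) ≠ 0) (n : ℕ) :
    ∑ s ∈ Finset.range n, P n * I s * y ^ (s * (2 * n + 1)) =
      ∑ s ∈ Finset.range n, (y ^ (s * (2 * s + 1)) + y ^ ((s + 1) * (2 * s + 1))) := by
  have hI' : ∀ s, I s * (1 - y ^ (2 * s + 1)) = I (s + 1) * (1 - y ^ (2 * s + 2)) := by
    intro s
    linear_combination I s * I (s + 1) * hP s + (1 - y ^ (2 * s + 2)) * I (s + 1) * hI s
      - I s * (1 - y ^ (2 * s + 1)) * hI (s + 1)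
  induction n with
  | zero => simp
  | succ n ih =>
    rw [Finset.sum_range_succ _ n, Finset.sum_range_succ _ n, ← ih]
    apply mul_left_cancel₀ (hy n)
    -- the difference of the sums for `n + 1` and `n` telescopes
    have tele : ∀ m, (1 - y ^ (2 * n + 1)) *
          (∑ s ∈ Finset.range m, P (n + 1) * I s * y ^ (s * (2 * (n + 1) + 1))
            - ∑ s ∈ Finset.range m, P n * I s * y ^ (s * (2 * n + 1)))
        = P n * I m * y ^ (m * (2 * n + 1)) * (1 - y ^ (2 * m)) := by
      intro m
      induction m with
      | zero => simp
      | succ m ihm =>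
        rw [Finset.sum_range_succ, Finset.sum_range_succ]
        linear_combination ihm + I m * y ^ (m * (2 * (n + 1) + 1)) * hP n
          + P n * y ^ ((m + 1) * (2 * n + 1)) * hI' m
    linear_combination tele n + I n * y ^ (n * (2 * (n + 1) + 1)) * hP n
      + (y ^ (n * (2 * n + 1)) * (1 - y ^ (2 * n))
        + (1 - y ^ (2 * n + 2)) * y ^ (n * (2 * (n + 1) + 1))) * hI n

end Limit

/-! ### The limit of the finite identity -/

section Product

/-- The `k`-th factor of the product side. -/
noncomputable def factor (k : ℕ) : ℚ⟦X⟧ :=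
  (1 - q ^ (8*k+1)) * (1 - q ^ (8*k+2)) * (1 - q ^ (8*k+3)) * (1 - q ^ (8*k+4))^2
    * (1 - q ^ (8*k+5)) * (1 - q ^ (8*k+6)) * (1 - q ^ (8*k+7))

lemma one_sub_mul_inv (n : ℕ) : (1 - q ^ (n + 1)) * (1 - q ^ (n + 1) : ℚ⟦X⟧)⁻¹ = 1 :=
  PowerSeries.mul_inv_cancel _ (by simp [q])

/-- The partial products `(q^8;q^8)_n / (q^4;q^8)_n` of Gauss's product for triangular numbers. -/
noncomputable def gaussProd (n : ℕ) : ℚ⟦X⟧ :=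
  ∏ j ∈ Finset.range n, ((1 - q ^ (8 * j + 8)) * (1 - q ^ (8 * j + 3 + 1))⁻¹)

lemma gaussProd_mul_inv (n : ℕ) : gaussProd n * (gaussProd n)⁻¹ = 1 :=
  PowerSeries.mul_inv_cancel _ (by simp [gaussProd, q])

lemma gaussProd_succ (n : ℕ) :
    gaussProd (n + 1) * (1 - (q ^ 4) ^ (2 * n + 1)) =
      gaussProd n * (1 - (q ^ 4) ^ (2 * n + 2)) := by
  rw [gaussProd, Finset.prod_range_succ, ← gaussProd, ← pow_mul, ← pow_mul,
    show 4 * (2 * n + 1) = 8 * n + 3 + 1 by ring, show 4 * (2 * n + 2) = 8 * n + 8 by ring]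
  linear_combination gaussProd n * (1 - q ^ (8 * n + 8)) * one_sub_mul_inv (8 * n + 3)

/-- The partial products of the product side complete `gaussProd` to `(q;q)_{8n}`. -/
lemma prod_factor_mul_gaussProd (n : ℕ) :
    (∏ k ∈ Finset.range n, factor k) * gaussProd n = qPoch (8 * n) := by
  induction n with
  | zero => simp [gaussProd, qPoch]
  | succ n ih =>
    have h8 : qPoch (8 * (n + 1)) = qPoch (8 * n) * ((1 - q ^ (8*n+1)) * (1 - q ^ (8*n+2))
        * (1 - q ^ (8*n+3)) * (1 - q ^ (8*n+4)) * (1 - q ^ (8*n+5)) * (1 - q ^ (8*n+6))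
        * (1 - q ^ (8*n+7)) * (1 - q ^ (8*n+8))) := by
      rw [mul_add, mul_one, qPoch]
      simp only [Finset.prod_range_succ _ (_ + _), qPoch, Finset.prod_range_succ, mul_assoc]
    rw [h8, ← ih, gaussProd, Finset.prod_range_succ, Finset.prod_range_succ, ← gaussProd, factor]
    linear_combination (∏ k ∈ Finset.range n, factor k) * gaussProd n * (1 - q ^ (8*n+1))
      * (1 - q ^ (8*n+2)) * (1 - q ^ (8*n+3)) * (1 - q ^ (8*n+4)) * (1 - q ^ (8*n+5))
      * (1 - q ^ (8*n+6)) * (1 - q ^ (8*n+7)) * (1 - q ^ (8*n+8)) * one_sub_mul_inv (8 * n + 3)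

lemma sum_trunc {M : Type*} [AddCommMonoid M] (f : ℤ → M) (n : ℕ) :
    ∑ i ∈ Finset.Ioc (-n : ℤ) n, f i = ∑ s ∈ Finset.range n, (f (-s) + f (s + 1)) := by
  induction n with
  | zero => simp
  | succ n ih =>
    rw [Finset.sum_range_succ, ← ih]
    have h : Finset.Ioc (-(n + 1 : ℕ) : ℤ) (n + 1 : ℕ) =
        insert (-(n : ℤ)) (insert ((n : ℤ) + 1) (Finset.Ioc (-n : ℤ) n)) := by
      ext i
      simp only [Finset.mem_insert, Finset.mem_Ioc]
      push_cast
      omega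
    rw [h, Finset.sum_insert, Finset.sum_insert]
    · abel
    · simp
    · simp only [Finset.mem_insert, Finset.mem_Ioc]
      omega

/-- Gauss's identity for triangular numbers, in `q^4` and modulo `q^N`: in Shanks' finite form all
terms but the one with `s = 0` vanish modulo `q^N`. -/
lemma red_gauss (N : ℕ) :
    red N (∑ i ∈ trunc N, q ^ fourTri i) = red N (gaussProd (N + 1)) := by
  have hs := shanks (q ^ 4 : ℚ⟦X⟧) gaussProd (fun n => (gaussProd n)⁻¹) gaussProd_mul_inv
    gaussProd_succ (fun n h => by
      have := congrArg constantCoeff h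
      simp [q] at this) (N + 1)
  have h1 : ∑ i ∈ trunc N, (q ^ fourTri i : ℚ⟦X⟧) = ∑ s ∈ Finset.range (N + 1),
      ((q ^ 4) ^ (s * (2 * s + 1)) + (q ^ 4) ^ ((s + 1) * (2 * s + 1))) := by
    have := sum_trunc (fun i => (q ^ fourTri i : ℚ⟦X⟧)) (N + 1)
    rw [trunc, show ((N : ℤ) + 1) = ((N + 1 : ℕ) : ℤ) by push_cast; ring, this]
    refine Finset.sum_congr rfl fun s _ => ?_
    rw [← pow_mul, ← pow_mul]
    congr 2
    · zify; rw [fourTri_cast]; ring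
    · zify; rw [fourTri_cast]; ring
  rw [h1, ← hs, Finset.sum_range_succ', map_add, map_sum, Finset.sum_eq_zero, zero_add, zero_mul,
    pow_zero, mul_one]
  · simp [gaussProd]
  · intro s _
    rw [map_mul, ← pow_mul, red_q_pow, mul_zero]
    nlinarith

end Product

section Combine

lemma red_thetaMonomial {N : ℕ} {p : ℤ × ℤ} (h : p ∉ trunc N ×ˢ trunc N) :
    red N (thetaMonomial p) = 0 := by
  rw [thetaMonomial, map_mul, red_q_pow, mul_zero]
  rw [Finset.mem_product, not_and_or] at h
  rcases h with h | h
  · exact (le_pentagonal h).trans (Nat.le_add_right _ _)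
  · exact (le_fourTri h).trans (Nat.le_add_left _ _)

/-- The limit `n → ∞` of the finite identity, modulo `q^N`. -/
lemma red_limit (N : ℕ) :
    red N (∑ m ∈ Finset.range N, level m) * red N (qPoch N)⁻¹ =
      red N (qPoch N) * red N (gaussProd (N + 1)) * red N (qPoch N)⁻¹ ^ 3 := by
  set n := 8 * N + 8 with hn
  set B := Finset.Icc (-(4 * n + 4) : ℤ) (4 * n + 4) ×ˢ Finset.Icc (-(4 * n + 4) : ℤ) (4 * n + 4)
    with hB
  have hsub : trunc N ×ˢ trunc N ⊆ B := by
    intro p hp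
    simp only [hB, trunc, Finset.mem_product, Finset.mem_Ioc, Finset.mem_Icc] at hp ⊢
    omega
  have h := congrArg (red N) (finite_identity' n B subset_rfl)
  have hl : red N (∑ p ∈ Finset.HasAntidiagonal.antidiagonal n, level p.1 * (qPoch p.2)⁻¹) =
      red N (∑ m ∈ Finset.range N, level m) * red N (qPoch N)⁻¹ := by
    rw [Finset.Nat.sum_antidiagonal_eq_sum_range_succ_mk, map_sum, map_sum, Finset.sum_mul,
      ← Finset.sum_subset (Finset.range_mono (show N ≤ n + 1 by omega))]
    · refine Finset.sum_congr rfl fun m hm => ?_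
      rw [Finset.mem_range] at hm
      rw [map_mul, red_qPoch_inv (by omega)]
    · intro m _ hm
      rw [Finset.mem_range] at hm
      rw [map_mul, red_level (by omega), zero_mul]
  have hr : red N (∑ p ∈ B, thetaMonomial p * (rq (n + (param p).1) * rq (n + (param p).2) *
        rq (n - (param p).1 - (param p).2))) =
      red N (qPoch N) * red N (gaussProd (N + 1)) * red N (qPoch N)⁻¹ ^ 3 := by
    rw [map_sum, ← Finset.sum_subset hsub]
    · rw [← red_pentagonal, ← red_gauss, map_sum, map_sum, Finset.sum_mul_sum,
        ← Finset.sum_product', Finset.sum_mul]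
      refine Finset.sum_congr rfl fun p hp => ?_
      simp only [trunc, Finset.mem_product, Finset.mem_Ioc] at hp
      have hx : (N : ℤ) ≤ n + (param p).1 ∧ (N : ℤ) ≤ n + (param p).2 ∧
          (N : ℤ) ≤ n - (param p).1 - (param p).2 := by
        obtain ⟨a, h⟩ := param_cases p
        rcases h with ⟨h1, h2⟩ | ⟨h1, h2⟩ | ⟨h1, h2⟩ | ⟨h1, h2⟩ <;> rw [h2] <;> dsimp only <;>
          omega
      rw [map_mul, map_mul, map_mul, red_rq hx.1, red_rq hx.2.1, red_rq hx.2.2, thetaMonomial,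
        pow_add, map_mul, map_mul, map_mul]
      ring
    · intro p _ hp
      rw [map_mul, red_thetaMonomial hp, zero_mul]
  rw [hl, hr] at h
  exact h

/-- The theorem modulo `q^N`, with the infinite sum and product replaced by partial ones. -/
lemma red_main (N : ℕ) :
    red N (∑ m ∈ Finset.range N, level m) * red N (∏ k ∈ Finset.range (N + 1), factor k) = 1 := by
  have h1 := red_limit N
  have h2 := congrArg (red N) (prod_factor_mul_gaussProd (N + 1))
  rw [map_mul, red_qPoch (by omega)] at h2
  have h3 := red_qPoch_mul_inv N N
  have h4 := congrArg (red N) (gaussProd_mul_inv (N + 1))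
  rw [map_mul, map_one] at h4
  set S := red N (∑ m ∈ Finset.range N, level m)
  set R := red N (∏ k ∈ Finset.range (N + 1), factor k)
  set u := red N (qPoch N)⁻¹
  set Q := red N (qPoch N)
  set P := red N (gaussProd (N + 1))
  set J := red N (gaussProd (N + 1))⁻¹
  have h5 : S * Q = P := by
    have e1 : S * u * Q ^ 2 = S * Q := by linear_combination S * Q * h3
    have e2 : Q * P * u ^ 3 * Q ^ 2 = P := by
      have : (Q * u) ^ 3 = 1 := by rw [h3, one_pow]
      linear_combination P * this
    rw [← e1, h1, e2]
  linear_combination (-S * R) * h4 + S * J * h2 + J * h5 + h4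

end Combine

/-! ### Convergence -/

section Convergence

/-- A net which is eventually constant modulo each `q^N` converges coefficientwise. -/
lemma tendsto_of_red {ι : Type*} {F : Finset ι → ℚ⟦X⟧} {r : ℚ⟦X⟧}
    (h : ∀ N, ∃ A : Finset ι, ∀ T, A ⊆ T → red N (F T) = red N r) :
    Filter.Tendsto F Filter.atTop (nhds r) := by
  refine (PowerSeries.WithPiTopology.tendsto_iff_coeff_tendsto ℚ F Filter.atTop r).2 fun d => ?_
  obtain ⟨A, hA⟩ := h (d + 1)
  refine tendsto_const_nhds.congr' ?_
  filter_upwards [Filter.eventually_ge_atTop A] with T hT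
  exact (red_eq_iff.1 (hA T hT) d d.lt_succ_self).symm

lemma t2Space : T2Space ℚ⟦X⟧ := PowerSeries.WithPiTopology.instT2Space (R := ℚ)

/-- The sum side as a power series, each coefficient being read off a partial sum. -/
noncomputable def sumSeries : ℚ⟦X⟧ :=
  mk fun d => coeff d (∑ m ∈ Finset.range (d + 1), level m)

/-- The infinite product as a power series, each coefficient being read off a partial product. -/
noncomputable def prodSeries : ℚ⟦X⟧ :=
  mk fun d => coeff d (∏ k ∈ Finset.range (d + 2), factor k)

lemma red_sum_level {N n : ℕ} (h : N ≤ n) :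
    red N (∑ m ∈ Finset.range n, level m) = red N (∑ m ∈ Finset.range N, level m) := by
  rw [map_sum, map_sum]
  refine (Finset.sum_subset (Finset.range_mono h) fun m _ hm => red_level ?_).symm
  simpa using hm

lemma red_sumSeries (N : ℕ) : red N sumSeries = red N (∑ m ∈ Finset.range N, level m) := by
  rw [red_eq_iff]
  intro d hd
  rw [sumSeries, coeff_mk]
  exact (red_eq_iff.1 (red_sum_level hd) d d.lt_succ_self).symm

lemma red_factor {N k : ℕ} (h : N ≤ k) : red N (factor k) = 1 := by
  have h' : ∀ j, red N (q ^ (8 * k + j)) = 0 := fun j => red_q_pow (by omega)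
  simp only [factor, map_mul, map_sub, map_one, map_pow (red N) (1 - _), h', sub_zero, mul_one,
    one_pow]

lemma red_prod_factor {N : ℕ} {T : Finset ℕ} (h : Finset.range N ⊆ T) :
    red N (∏ k ∈ T, factor k) = red N (∏ k ∈ Finset.range N, factor k) := by
  rw [map_prod, map_prod]
  refine (Finset.prod_subset h fun k _ hk => red_factor ?_).symm
  simpa using hk

lemma red_prodSeries (N : ℕ) : red N prodSeries = red N (∏ k ∈ Finset.range N, factor k) := by
  rw [red_eq_iff]
  intro d hd
  rw [prodSeries, coeff_mk,
    red_eq_iff.1 (red_prod_factor (Finset.range_mono (Nat.le_succ (d + 1)))) d d.lt_succ_self,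
    red_eq_iff.1 (red_prod_factor (Finset.range_mono hd)) d d.lt_succ_self]

lemma hasProd_factor : HasProd factor prodSeries :=
  tendsto_of_red fun N => ⟨Finset.range N, fun T hT => by rw [red_prod_factor hT, red_prodSeries]⟩

lemma summand_eq_zero {m : ℕ} {n : ℕ × ℕ × ℕ} (h : n ∉ box m) : summand m n.1 n.2.1 n.2.2 = 0 := by
  obtain ⟨a, b, c⟩ := n
  simp only [box, Finset.mem_product, Finset.mem_range] at h
  have h' : ¬ a ≤ m ∨ ¬ c ≤ m ∨ ¬ b ≤ a := by omega
  rcases h' with h | h | h <;> simp [summand, qBinom, h]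

lemma hasSum_summand :
    HasSum (fun n : ℕ × ℕ × ℕ × ℕ => summand n.1 n.2.1 n.2.2.1 n.2.2.2) sumSeries := by
  refine tendsto_of_red fun N => ⟨Finset.range N ×ˢ box N, fun T hT => ?_⟩
  rw [red_sumSeries]
  have h1 : ∑ m ∈ Finset.range N, level m =
      ∑ n ∈ Finset.range N ×ˢ box N, summand n.1 n.2.1 n.2.2.1 n.2.2.2 := by
    rw [Finset.sum_product]
    refine Finset.sum_congr rfl fun m hm => ?_
    refine Finset.sum_subset ?_ fun n _ hn => summand_eq_zero hn
    have := Finset.range_mono (show m + 1 ≤ N + 1 by have := Finset.mem_range.1 hm; omega)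
    exact Finset.product_subset_product this (Finset.product_subset_product this this)
  rw [h1, map_sum, map_sum]
  refine (Finset.sum_subset hT ?_).symm
  rintro ⟨m, n⟩ _ hn
  by_cases hm : N ≤ m
  · exact red_summand hm _ _ _
  · rw [summand_eq_zero, map_zero]
    intro hb
    refine hn (Finset.mem_product.2 ⟨Finset.mem_range.2 (not_le.1 hm), ?_⟩)
    simp only [box, Finset.mem_product, Finset.mem_range] at hb ⊢
    omega

lemma sumSeries_mul_prodSeries : sumSeries * prodSeries = 1 := by
  ext d
  refine (red_eq_iff (N := d + 1)).1 ?_ d d.lt_succ_self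
  rw [map_mul, map_one, red_sumSeries, red_prodSeries,
    ← red_prod_factor (Finset.range_mono (Nat.le_succ (d + 1)))]
  exact red_main (d + 1)

lemma sumSeries_eq : sumSeries = prodSeries⁻¹ := by
  refine (PowerSeries.eq_inv_iff_mul_eq_one fun h0 => ?_).2 sumSeries_mul_prodSeries
  have := congrArg constantCoeff sumSeries_mul_prodSeries
  simp [h0] at this

end Convergence

end A2Mod8

/-- Second new modulus-8 A₂ Rogers–Ramanujan identity (profile (4,1,0)). -/
theorem a2_mod8_profile410 :
    ∑' n : ℕ × ℕ × ℕ × ℕ,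
      (fun n₁ n₂ n₃ n₄ : ℕ =>
        q ^ (n₁ ^ 2 + n₂ ^ 2 + n₃ ^ 2 + n₄ ^ 2 + (n₂ + n₃ + n₄) + n₂ * n₄ - n₁ * n₂)
          * (1) * (qPoch n₁)⁻¹ * qBinom n₁ n₂ * qBinom n₁ n₄ * qBinom n₂ n₃)
      n.1 n.2.1 n.2.2.1 n.2.2.2
      = (∏' k : ℕ, ((1 - q ^ (8*k+1)) * (1 - q ^ (8*k+2)) * (1 - q ^ (8*k+3)) * (1 - q ^ (8*k+4))^2 * (1 - q ^ (8*k+5)) * (1 - q ^ (8*k+6)) * (1 - q ^ (8*k+7))))⁻¹ := by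
  have := A2Mod8.t2Space
  refine A2Mod8.hasSum_summand.tsum_eq.trans (A2Mod8.sumSeries_eq.trans ?_)
  exact congrArg _ A2Mod8.hasProd_factor.tprod_eq.symm
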